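/- arXiv:1810.07131 — 2 statements merged into one kernel-verified Lean document; each statement's English description precedes it below -/
import Mathlib

section
/- Let d ≥ 1 be an integer, δ > 0, k > 0, and α ∈ ((d−1)/2, d+2) with α ≠ d. Then lim_{ε→0^+} ∫_0^∞ [ (2/(k r))^{(d−2)/2} J_{(d−2)/2}(k r) − χ_{[0,δ]}(r)/Γ(d/2) ] (r + ε)^{d−1−α} dr = (k/2)^{α−d} Γ((d−α)/2) / (2 Γ(α/2)) − δ^{d−α} / ((d−α) Γ(d/2)), where for each fixed ε > 0 the integral over (0, ∞) is understood as the improper limit lim_{R→∞} ∫_0^R. -/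
open MeasureTheory Filter Set

/-- The Bessel function of the first kind of order `ν`,
`J_ν(x) = Σ_{m=0}^∞ (−1)^m (x/2)^{ν+2m} / (m! Γ(ν+m+1))`. -/
noncomputable def besselJ (ν x : ℝ) : ℝ :=
  ∑' m : ℕ, (-1) ^ m * (x / 2) ^ (ν + 2 * (m : ℝ)) /
    ((Nat.factorial m : ℝ) * Real.Gamma (ν + (m : ℝ) + 1))

/-- `G_D(u) = Σ (-u)^m / (m! Γ(D/2+m))`. -/
noncomputable def bG (D u : ℝ) : ℝ :=
  ∑' m : ℕ, (-1 : ℝ) ^ m * u ^ m / ((Nat.factorial m : ℝ) * Real.Gamma (D / 2 + m))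

lemma bG_gamma_pos {D : ℝ} (hD : 1 ≤ D) (m : ℕ) : 0 < Real.Gamma (D / 2 + m) :=
  Real.Gamma_pos_of_pos (by positivity)

lemma bG_inv_gamma_le {D : ℝ} (hD : 1 ≤ D) (m : ℕ) :
    (Real.Gamma (D / 2 + m))⁻¹ ≤ 2 ^ m * (Real.Gamma (D / 2))⁻¹ := by
  induction m with
  | zero => simp
  | succ m ih =>
    have hp : 0 < D / 2 + m := by positivity
    have e : D / 2 + ((m + 1 : ℕ) : ℝ) = (D / 2 + m) + 1 := by push_cast; ring
    rw [e, Real.Gamma_add_one hp.ne', mul_inv, pow_succ]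
    have h1 : (D / 2 + m)⁻¹ ≤ 2 := by
      rw [inv_le_comm₀ hp (by norm_num)]
      have : (0:ℝ) ≤ m := by positivity
      linarith
    have h2 := bG_gamma_pos hD m
    calc (D / 2 + m)⁻¹ * (Real.Gamma (D / 2 + m))⁻¹
        ≤ 2 * (2 ^ m * (Real.Gamma (D / 2))⁻¹) := by
          apply mul_le_mul h1 ih (by positivity) (by norm_num)
      _ = _ := by ring

lemma bG_term_bound {D : ℝ} (hD : 1 ≤ D) (u : ℝ) (m : ℕ) :
    ‖(-1 : ℝ) ^ m * u ^ m / ((Nat.factorial m : ℝ) * Real.Gamma (D / 2 + m))‖ ≤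
      (Real.Gamma (D / 2))⁻¹ * ((2 * |u|) ^ m / (Nat.factorial m : ℝ)) := by
  have h2 := bG_gamma_pos hD m
  have h3 := bG_inv_gamma_le hD m
  rw [Real.norm_eq_abs, abs_div, abs_mul, abs_pow, abs_pow, abs_neg, abs_one, one_pow, one_mul,
    abs_of_pos (by positivity : 0 < (Nat.factorial m : ℝ) * Real.Gamma (D / 2 + m))]
  calc |u| ^ m / ((Nat.factorial m : ℝ) * Real.Gamma (D / 2 + m))
      = (|u| ^ m / (Nat.factorial m : ℝ)) * (Real.Gamma (D / 2 + m))⁻¹ := by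
        field_simp
    _ ≤ (|u| ^ m / (Nat.factorial m : ℝ)) * (2 ^ m * (Real.Gamma (D / 2))⁻¹) := by gcongr
    _ = _ := by rw [mul_pow]; ring

lemma bG_summable {D : ℝ} (hD : 1 ≤ D) (u : ℝ) :
    Summable (fun m : ℕ =>
      (-1 : ℝ) ^ m * u ^ m / ((Nat.factorial m : ℝ) * Real.Gamma (D / 2 + m))) :=
  Summable.of_norm_bounded ((Real.summable_pow_div_factorial (2 * |u|)).mul_left _)
    (bG_term_bound hD u)

lemma bG_hasSum {D : ℝ} (hD : 1 ≤ D) (u : ℝ) :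
    HasSum (fun m : ℕ =>
      (-1 : ℝ) ^ m * u ^ m / ((Nat.factorial m : ℝ) * Real.Gamma (D / 2 + m))) (bG D u) :=
  (bG_summable hD u).hasSum

/-- termwise derivative sums to `-G_{D+2}` -/
lemma bG_hasSum_deriv {D : ℝ} (hD : 1 ≤ D) (u : ℝ) :
    HasSum (fun m : ℕ =>
      (-1 : ℝ) ^ m * (m * u ^ (m - 1)) / ((Nat.factorial m : ℝ) * Real.Gamma (D / 2 + m)))
      (-bG (D + 2) u) := by
  rw [← hasSum_nat_add_iff' 1]
  simp only [Finset.range_one, Finset.sum_singleton, Nat.cast_zero, zero_mul, mul_zero, zero_div,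
    sub_zero]
  have h := (bG_hasSum (D := D + 2) (by linarith) u).neg
  convert h using 1
  ext m
  have e : (D + 2) / 2 + (m : ℝ) = D / 2 + ((m + 1 : ℕ) : ℝ) := by push_cast; ring
  rw [e, Nat.factorial_succ]
  have h2 := bG_gamma_pos hD (m + 1)
  have h4 : (Nat.factorial m : ℝ) ≠ 0 := by positivity
  simp only [Nat.add_sub_cancel]
  push_cast at h2 ⊢
  field_simp
  ring

lemma bG_hasDerivAt {D : ℝ} (hD : 1 ≤ D) (u : ℝ) :
    HasDerivAt (bG D) (-bG (D + 2) u) u := by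
  rw [← (bG_hasSum_deriv hD u).tsum_eq]
  have hs : Summable (fun m : ℕ => (Real.Gamma ((D + 2) / 2))⁻¹ *
      ((2 * (|u| + 1)) ^ m / (Nat.factorial m : ℝ))) :=
    (Real.summable_pow_div_factorial (2 * (|u| + 1))).mul_left _
  have hs' : Summable (fun m : ℕ => if m = 0 then 0 else (Real.Gamma ((D + 2) / 2))⁻¹ *
      ((2 * (|u| + 1)) ^ (m - 1) / (Nat.factorial (m - 1) : ℝ))) := by
    rw [← summable_nat_add_iff 1]
    simpa using hs
  refine hasDerivAt_tsum_of_isPreconnected (t := Metric.ball u 1) (y₀ := u) hs' Metric.isOpen_ball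
    (convex_ball u 1).isPreconnected (g := fun (m : ℕ) (u : ℝ) =>
      (-1 : ℝ) ^ m * u ^ m / ((Nat.factorial m : ℝ) * Real.Gamma (D / 2 + m)))
    (g' := fun (m : ℕ) (u : ℝ) =>
      (-1 : ℝ) ^ m * (m * u ^ (m - 1)) / ((Nat.factorial m : ℝ) * Real.Gamma (D / 2 + m)))
    ?_ ?_ (Metric.mem_ball_self one_pos) (bG_summable hD u) (Metric.mem_ball_self one_pos)
  · intro m y _
    exact ((hasDerivAt_pow m y).const_mul _).div_const _
  · intro m y hy
    cases m with
    | zero => simp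
    | succ m =>
      simp only [Nat.add_sub_cancel, Nat.succ_ne_zero, if_false]
      have hb := bG_term_bound (D := D + 2) (by linarith) y m
      have e : (D + 2) / 2 + (m : ℝ) = D / 2 + ((m + 1 : ℕ) : ℝ) := by push_cast; ring
      rw [e] at hb
      have h2 := bG_gamma_pos hD (m + 1)
      have h4 : (Nat.factorial m : ℝ) ≠ 0 := by positivity
      have e2 : (-1 : ℝ) ^ (m + 1) * (((m + 1 : ℕ) : ℝ) * y ^ m) /
          ((Nat.factorial (m + 1) : ℝ) * Real.Gamma (D / 2 + ((m + 1 : ℕ) : ℝ))) =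
          -((-1 : ℝ) ^ m * y ^ m / ((Nat.factorial m : ℝ) *
            Real.Gamma (D / 2 + ((m + 1 : ℕ) : ℝ)))) := by
        rw [Nat.factorial_succ]
        push_cast at h2 ⊢
        field_simp
        ring
      rw [e2, norm_neg]
      refine hb.trans ?_
      have hy' : |y| ≤ |u| + 1 := by
        have := Metric.mem_ball.1 hy
        rw [Real.dist_eq] at this
        have := abs_add_le (y - u) u
        simp only [sub_add_cancel] at this
        linarith
      have : 0 < Real.Gamma ((D + 2) / 2) := Real.Gamma_pos_of_pos (by linarith)
      gcongr

lemma bG_rec {D : ℝ} (hD : 1 ≤ D) (u : ℝ) :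
    bG D u = D / 2 * bG (D + 2) u - u * bG (D + 4) u := by
  have h1 := (bG_hasSum (D := D + 2) (by linarith) u).mul_left (D / 2)
  have h2 := (bG_hasSum_deriv (D := D + 2) (by linarith) u).mul_left u
  have h3 := h1.add h2
  have h4 := bG_hasSum hD u
  have : D / 2 * bG (D + 2) u + u * -bG (D + 2 + 2) u = bG D u := by
    refine h3.tsum_eq.symm.trans ((tsum_congr fun m => ?_).trans h4.tsum_eq)
    have hp : 0 < D / 2 + m := by positivity
    have e : (D + 2) / 2 + (m : ℝ) = (D / 2 + m) + 1 := by ring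
    rw [e, Real.Gamma_add_one hp.ne']
    have h2 := bG_gamma_pos hD m
    have e3 : u * ((-1 : ℝ) ^ m * (m * u ^ (m - 1)) / ((Nat.factorial m : ℝ) *
        ((D / 2 + m) * Real.Gamma (D / 2 + m)))) = (-1 : ℝ) ^ m * (m * u ^ m) /
        ((Nat.factorial m : ℝ) * ((D / 2 + m) * Real.Gamma (D / 2 + m))) := by
      cases m with
      | zero => simp
      | succ m => simp only [Nat.add_sub_cancel, pow_succ]; ring
    rw [e3]
    have h5 : (Nat.factorial m : ℝ) ≠ 0 := by positivity
    field_simp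
  rw [← this, show D + 2 + 2 = D + 4 by ring]; ring

/-- `F_D(x) = G_D(x²/4)`. -/
noncomputable def bF (D x : ℝ) : ℝ := bG D (x ^ 2 / 4)

lemma bF_zero (D : ℝ) : bF D 0 = (Real.Gamma (D / 2))⁻¹ := by
  unfold bF bG
  rw [tsum_eq_single 0]
  · simp
  · intro m hm
    simp [hm]

lemma bF_hasDerivAt {D : ℝ} (hD : 1 ≤ D) (x : ℝ) :
    HasDerivAt (bF D) (-(x / 2) * bF (D + 2) x) x := by
  have h := (bG_hasDerivAt hD (x ^ 2 / 4)).comp x (((hasDerivAt_id x).pow 2).div_const 4)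
  refine h.congr_deriv ?_
  simp [bF]; ring

lemma bF_rec {D : ℝ} (hD : 1 ≤ D) (x : ℝ) :
    bF D x = D / 2 * bF (D + 2) x - x ^ 2 / 4 * bF (D + 4) x := bG_rec hD _

lemma bF_continuous {D : ℝ} (hD : 1 ≤ D) : Continuous (bF D) :=
  continuous_iff_continuousAt.2 fun x => (bF_hasDerivAt hD x).continuousAt

lemma bF_bounded {D : ℝ} (hD : 1 ≤ D) {x : ℝ} (hx : 0 ≤ x) :
    |bF D x| ≤ (Real.Gamma (D / 2))⁻¹ := by
  have hder : ∀ x, HasDerivAt (fun x => (bF D x) ^ 2 + (x / 2 * bF (D + 2) x) ^ 2)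
      (-(x * (D - 1) / 2 * (bF (D + 2) x) ^ 2)) x := by
    intro x
    have h1 := (bF_hasDerivAt hD x).pow 2
    have h2 := ((((hasDerivAt_id x).div_const 2).mul
      (bF_hasDerivAt (D := D + 2) (by linarith) x)).pow 2)
    have h3 := h1.add h2
    have hr := bF_rec hD x
    refine h3.congr_deriv ?_
    simp only [id, Pi.mul_apply]
    rw [hr, show D + 2 + 2 = D + 4 by ring]
    simp; ring
  have hanti : AntitoneOn (fun x => (bF D x) ^ 2 + (x / 2 * bF (D + 2) x) ^ 2) (Ici 0) := by
    apply antitoneOn_of_deriv_nonpos (convex_Ici 0)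
    · exact fun x _ => (hder x).continuousAt.continuousWithinAt
    · exact fun x _ => (hder x).differentiableAt.differentiableWithinAt
    · intro x hx
      rw [interior_Ici] at hx
      rw [(hder x).deriv]
      have : 0 < x := hx
      have : 0 ≤ x * (D - 1) / 2 * (bF (D + 2) x) ^ 2 := by
        have : 0 ≤ D - 1 := by linarith
        positivity
      linarith
  have h := hanti (mem_Ici.2 le_rfl) (mem_Ici.2 hx) hx
  simp only [zero_div, zero_mul] at h
  rw [bF_zero] at h
  have hg : 0 < Real.Gamma (D / 2) := Real.Gamma_pos_of_pos (by linarith)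
  apply abs_le_of_sq_le_sq _ (by positivity)
  nlinarith [sq_nonneg (x / 2 * bF (D + 2) x)]

lemma bF_sub_zero_le {D : ℝ} (hD : 1 ≤ D) {x : ℝ} (hx : 0 ≤ x) :
    |bF D x - bF D 0| ≤ (Real.Gamma ((D + 2) / 2))⁻¹ * x ^ 2 := by
  have hg : 0 < Real.Gamma ((D + 2) / 2) := Real.Gamma_pos_of_pos (by linarith)
  have h := (convex_Icc 0 x).norm_image_sub_le_of_norm_hasDerivWithin_le
    (f := bF D) (f' := fun x => -(x / 2) * bF (D + 2) x)
    (C := (Real.Gamma ((D + 2) / 2))⁻¹ * x)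
    (fun y _ => (bF_hasDerivAt hD y).hasDerivWithinAt) (fun y hy => by
      have := bF_bounded (D := D + 2) (by linarith) hy.1
      rw [norm_mul, norm_neg, Real.norm_eq_abs, Real.norm_eq_abs,
        abs_of_nonneg (by linarith [hy.1] : 0 ≤ y / 2), mul_comm]
      apply mul_le_mul this (by linarith [hy.1, hy.2]) (by linarith [hy.1]) (by positivity))
    (left_mem_Icc.2 hx) (right_mem_Icc.2 hx)
  rw [Real.norm_eq_abs, Real.norm_eq_abs, sub_zero, abs_of_nonneg hx] at h
  linarith [h, show (Real.Gamma ((D + 2) / 2))⁻¹ * x * x = (Real.Gamma ((D + 2) / 2))⁻¹ * x ^ 2 by ring]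

lemma bF_decay {D : ℝ} (hD : 3 ≤ D) :
    ∃ C, 0 ≤ C ∧ ∀ x, 0 < x → |bF D x| ≤ C * x ^ (-((D - 1) / 2)) := by
  set a : ℝ := (D - 1) / 2 with ha
  set μ : ℝ := a ^ 2 - a with hμ
  have hμ0 : 0 ≤ μ := by rw [hμ]; nlinarith
  set p : ℝ → ℝ := fun x => x ^ a * (-(x / 2) * bF (D + 2) x + a * bF D x / x) with hp
  have hy : ∀ x, 0 < x → HasDerivAt (fun x => x ^ a * bF D x) (p x) x := by
    intro x hx
    have h := (Real.hasDerivAt_rpow_const (p := a) (Or.inl hx.ne')).mul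
      (bF_hasDerivAt (D := D) (by linarith) x)
    refine h.congr_deriv ?_
    rw [hp, Real.rpow_sub_one hx.ne']
    field_simp
    ring
  have hpd : ∀ x, 0 < x → HasDerivAt p (-(1 - μ / x ^ 2) * (x ^ a * bF D x)) x := by
    intro x hx
    have h1 := ((((hasDerivAt_id x).div_const 2).neg.mul
      (bF_hasDerivAt (D := D + 2) (by linarith) x)).add
      (((bF_hasDerivAt (D := D) (by linarith) x).const_mul a).div (hasDerivAt_id x) hx.ne'))
    have h := (Real.hasDerivAt_rpow_const (p := a) (Or.inl hx.ne')).mul h1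
    have hr := bF_rec (D := D) (by linarith) x
    refine h.congr_deriv ?_
    simp only [id, Pi.mul_apply, Pi.add_apply, Pi.neg_apply, Pi.div_apply]
    have hD2 : D = 2 * a + 1 := by rw [ha]; ring
    rw [Real.rpow_sub_one hx.ne', hμ, show D + 2 + 2 = D + 4 by ring]
    have : bF (D + 4) x = (D / 2 * bF (D + 2) x - bF D x) * 4 / x ^ 2 := by
      rw [hr]; field_simp; ring
    rw [this, show D / 2 = a + 1 / 2 by rw [ha]; ring]
    field_simp
    ring
  set x₀ : ℝ := μ + 1 with hx₀
  have hq : ∀ x, x₀ ≤ x → 0 < 1 - μ / x ^ 2 := by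
    intro x hx
    have : 0 < x := by linarith
    rw [sub_pos, div_lt_one (by positivity)]
    nlinarith
  have hqd : ∀ x, 0 < x → HasDerivAt (fun x : ℝ => 1 - μ / x ^ 2) (2 * μ / x ^ 3) x := by
    intro x hx
    have h := ((hasDerivAt_const x μ).div ((hasDerivAt_id x).pow 2)
      (pow_ne_zero 2 hx.ne')).const_sub 1
    refine h.congr_deriv ?_
    simp
    field_simp
  have hH : ∀ x, x₀ ≤ x → HasDerivAt
      (fun x => (x ^ a * bF D x) ^ 2 + (p x) ^ 2 / (1 - μ / x ^ 2))
      (-((p x) ^ 2 * (2 * μ / x ^ 3) / (1 - μ / x ^ 2) ^ 2)) x := by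
    intro x hx
    have hx0 : 0 < x := by linarith
    have h := ((hy x hx0).pow 2).add (((hpd x hx0).pow 2).div (hqd x hx0) (hq x hx).ne')
    refine h.congr_deriv ?_
    have := (hq x hx).ne'
    simp only [Pi.pow_apply]
    generalize 1 - μ / x ^ 2 = q at *
    push_cast
    field_simp
    ring
  have hanti : AntitoneOn (fun x => (x ^ a * bF D x) ^ 2 + (p x) ^ 2 / (1 - μ / x ^ 2))
      (Ici x₀) := by
    apply antitoneOn_of_deriv_nonpos (convex_Ici x₀)
    · exact fun x hx => (hH x hx).continuousAt.continuousWithinAt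
    · intro x hx
      rw [interior_Ici] at hx
      exact (hH x (le_of_lt hx)).differentiableAt.differentiableWithinAt
    · intro x hx
      rw [interior_Ici] at hx
      rw [(hH x (le_of_lt hx)).deriv]
      have : 0 < x := by linarith [mem_Ioi.1 hx]
      have : 0 ≤ (p x) ^ 2 * (2 * μ / x ^ 3) / (1 - μ / x ^ 2) ^ 2 := by positivity
      linarith
  set E : ℝ := (x₀ ^ a * bF D x₀) ^ 2 + (p x₀) ^ 2 / (1 - μ / x₀ ^ 2) with hE
  have hE0 : 0 ≤ E := by
    have := hq x₀ le_rfl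
    positivity
  have hg : 0 < Real.Gamma (D / 2) := Real.Gamma_pos_of_pos (by linarith)
  have hx₀p : 0 < x₀ := by linarith
  have key : ∀ x, 0 < x → |x ^ a * bF D x| ≤ √E + x₀ ^ a * (Real.Gamma (D / 2))⁻¹ := by
    intro x hx
    rcases le_total x₀ x with h | h
    · have h1 := hanti (mem_Ici.2 le_rfl) (mem_Ici.2 h) h
      have h2 : (x ^ a * bF D x) ^ 2 ≤ E := by
        have := hq x h
        have : 0 ≤ (p x) ^ 2 / (1 - μ / x ^ 2) := by positivity
        simp only at h1
        linarith
      have := Real.abs_le_sqrt h2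
      have : 0 ≤ x₀ ^ a * (Real.Gamma (D / 2))⁻¹ := by positivity
      linarith
    · rw [abs_mul, abs_of_pos (Real.rpow_pos_of_pos hx a)]
      have h1 : x ^ a ≤ x₀ ^ a := Real.rpow_le_rpow hx.le h (by rw [ha]; linarith)
      have h2 := bF_bounded (D := D) (by linarith) hx.le
      have := mul_le_mul h1 h2 (abs_nonneg _) (by positivity)
      linarith [Real.sqrt_nonneg E]
  refine ⟨√E + x₀ ^ a * (Real.Gamma (D / 2))⁻¹, by positivity, fun x hx => ?_⟩
  have h := key x hx
  rw [abs_mul, abs_of_pos (Real.rpow_pos_of_pos hx a)] at h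
  rw [Real.rpow_neg hx.le, ← div_eq_mul_inv, le_div_iff₀ (Real.rpow_pos_of_pos hx a)]
  linarith

lemma bF_gauss {D : ℝ} (hD : 1 ≤ D) {t : ℝ} (ht : 0 < t) :
    ∫ r in Ioi (0 : ℝ), bF D r * (r ^ (D - 1) * Real.exp (-t * r ^ (2 : ℝ))) =
      1 / 2 * t ^ (-(D / 2)) * Real.exp (-(1 / 4 * t⁻¹)) := by
  set c : ℕ → ℝ := fun m => (-1 : ℝ) ^ m / 4 ^ m / ((Nat.factorial m : ℝ) * Real.Gamma (D / 2 + m))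
    with hc
  set T : ℕ → ℝ → ℝ := fun m r => r ^ (D - 1 + 2 * m) * Real.exp (-t * r ^ (2 : ℝ)) with hT
  have hTint : ∀ m, IntegrableOn (T m) (Ioi 0) := fun m =>
    integrableOn_rpow_mul_exp_neg_mul_rpow (by have : (0:ℝ) ≤ m := by positivity
                                               linarith) (by norm_num) ht
  have hTval : ∀ m, ∫ r in Ioi (0 : ℝ), T m r =
      t ^ (-(D / 2)) * (t⁻¹) ^ m * (1 / 2) * Real.Gamma (D / 2 + m) := by
    intro m
    have h := integral_rpow_mul_exp_neg_mul_rpow (p := 2) (q := D - 1 + 2 * m) (b := t)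
      (by norm_num) (by have : (0:ℝ) ≤ m := by positivity
                        linarith) ht
    rw [hT]
    simp only
    rw [h, show (D - 1 + 2 * (m : ℝ) + 1) / 2 = D / 2 + m by ring,
      show -(D - 1 + 2 * (m : ℝ) + 1) / 2 = -(D / 2) + -(m : ℝ) by ring, Real.rpow_add ht,
      Real.rpow_neg ht.le (m : ℝ), Real.rpow_natCast, inv_pow]
  have hnorm : ∀ m, ∫ r in Ioi (0 : ℝ), ‖c m * T m r‖ =
      (t ^ (-(D / 2)) * (1 / 2)) * ((1 / 4 * t⁻¹) ^ m / (Nat.factorial m : ℝ)) := by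
    intro m
    have h1 : ∫ r in Ioi (0 : ℝ), ‖c m * T m r‖ = ∫ r in Ioi (0 : ℝ), |c m| * T m r := by
      apply setIntegral_congr_fun measurableSet_Ioi
      intro r hr
      have hr : 0 < r := hr
      have : 0 ≤ T m r := by simp only [hT]; positivity
      simp only [norm_mul, Real.norm_eq_abs, abs_of_nonneg this]
    have hg := bG_gamma_pos hD m
    rw [h1, integral_const_mul, hTval, hc]
    simp only
    rw [abs_div, abs_div, abs_pow, abs_neg, abs_one, one_pow, abs_of_pos (by positivity : (0:ℝ) < 4 ^ m),
      abs_of_pos (by positivity : 0 < (Nat.factorial m : ℝ) * Real.Gamma (D / 2 + m)), mul_pow, div_pow,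
      one_pow]
    field_simp
  have hs := hasSum_integral_of_summable_integral_norm (μ := volume.restrict (Ioi (0:ℝ)))
    (F := fun m r => c m * T m r) (fun m => (hTint m).const_mul _) (by
      simp only [hnorm]
      exact (Real.summable_pow_div_factorial _).mul_left _)
  have h1 : ∫ r in Ioi (0 : ℝ), bF D r * (r ^ (D - 1) * Real.exp (-t * r ^ (2 : ℝ))) =
      ∫ r in Ioi (0 : ℝ), ∑' m, c m * T m r := by
    apply setIntegral_congr_fun measurableSet_Ioi
    intro r hr
    have hr : 0 < r := hr
    simp only
    rw [bF, bG, ← tsum_mul_right]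
    apply tsum_congr
    intro m
    simp only [hc, hT]
    rw [Real.rpow_add hr, show (2 * (m : ℝ)) = ((2 * m : ℕ) : ℝ) by push_cast; ring,
      Real.rpow_natCast r (2 * m), div_pow, pow_mul]
    ring
  rw [h1, ← hs.tsum_eq]
  have h2 : ∀ m, ∫ r in Ioi (0 : ℝ), c m * T m r =
      (1 / 2 * t ^ (-(D / 2))) * ((-(1 / 4 * t⁻¹)) ^ m / (Nat.factorial m : ℝ)) := by
    intro m
    have hg := bG_gamma_pos hD m
    rw [integral_const_mul, hTval, hc]
    simp only
    rw [neg_pow (1 / 4 * t⁻¹), mul_pow, div_pow, one_pow]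
    field_simp
  simp only [h2]
  rw [tsum_mul_left, Real.exp_eq_exp_ℝ, NormedSpace.exp_eq_tsum_div]

lemma inv_gamma_integral {s : ℝ} (hs : 0 < s) :
    ∫ t in Ioi (0 : ℝ), t ^ (-s - 1) * Real.exp (-(1 / 4 * t⁻¹)) = 4 ^ s * Real.Gamma s := by
  have h := Real.integral_rpow_mul_exp_neg_mul_Ioi (a := s) (r := 1 / 4) hs (by norm_num)
  rw [← integral_comp_rpow_Ioi _ (p := -1) (by norm_num)] at h
  rw [show (1 : ℝ) / (1 / 4) = 4 by norm_num] at h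
  rw [← h]
  apply setIntegral_congr_fun measurableSet_Ioi
  intro t ht
  have ht : 0 < t := ht
  simp only [abs_neg, abs_one, one_mul, smul_eq_mul, Real.rpow_neg_one]
  rw [Real.inv_rpow ht.le, ← Real.rpow_neg ht.le, ← mul_assoc, ← Real.rpow_add ht]
  ring_nf

lemma bF_abs_integrable {D s : ℝ} (hD : 3 ≤ D) (hs : 0 < s) (hsD : s < (D - 1) / 2) :
    IntegrableOn (fun r => bF D r * r ^ (s - 1)) (Ioi 0) := by
  obtain ⟨C, hC0, hC⟩ := bF_decay hD
  have hcont : ContinuousOn (fun r => bF D r * r ^ (s - 1)) (Ioi 0) := by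
    intro x hx
    exact ((bF_continuous (by linarith)).continuousAt.mul
      (Real.continuousAt_rpow_const _ _ (Or.inl (ne_of_gt hx)))).continuousWithinAt
  rw [← Ioc_union_Ioi_eq_Ioi (zero_le_one : (0:ℝ) ≤ 1)]
  apply IntegrableOn.union
  · have h1 : IntegrableOn (fun r : ℝ => (Real.Gamma (D / 2))⁻¹ * r ^ (s - 1)) (Ioc 0 1) := by
      have := (intervalIntegral.intervalIntegrable_rpow' (a := 0) (b := 1)
        (r := s - 1) (by linarith)).const_mul (Real.Gamma (D / 2))⁻¹
      rwa [intervalIntegrable_iff_integrableOn_Ioc_of_le zero_le_one] at this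
    refine Integrable.mono' h1 ((hcont.mono Ioc_subset_Ioi_self).aestronglyMeasurable
      measurableSet_Ioc) ?_
    refine (ae_restrict_iff' measurableSet_Ioc).2 (Eventually.of_forall fun r hr => ?_)
    have hr0 : 0 < r := hr.1
    rw [norm_mul, Real.norm_eq_abs, Real.norm_eq_abs, abs_of_pos (Real.rpow_pos_of_pos hr0 _)]
    have := bF_bounded (D := D) (by linarith) hr0.le
    gcongr
  · have h1 : IntegrableOn (fun r : ℝ => C * r ^ (-((D - 1) / 2) + (s - 1))) (Ioi 1) :=
      (integrableOn_Ioi_rpow_of_lt (by linarith) one_pos).const_mul C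
    refine Integrable.mono' h1 ((hcont.mono (Ioi_subset_Ioi zero_le_one)).aestronglyMeasurable
      measurableSet_Ioi) ?_
    refine (ae_restrict_iff' measurableSet_Ioi).2 (Eventually.of_forall fun r hr => ?_)
    have hr0 : 0 < r := lt_trans one_pos hr
    rw [norm_mul, Real.norm_eq_abs, Real.norm_eq_abs, abs_of_pos (Real.rpow_pos_of_pos hr0 _),
      Real.rpow_add hr0, ← mul_assoc]
    have := hC r hr0
    gcongr

lemma bF_mellin_abs {D s : ℝ} (hD : 3 ≤ D) (hs : 0 < s) (hsD : s < (D - 1) / 2) :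
    ∫ r in Ioi (0 : ℝ), bF D r * r ^ (s - 1) =
      2 ^ (s - 1) * Real.Gamma (s / 2) / Real.Gamma ((D - s) / 2) := by
  have hint := bF_abs_integrable hD hs hsD
  set β : ℝ := (D - s) / 2 with hβ
  have hβ0 : 0 < β := by rw [hβ]; linarith
  have hg : 0 < Real.Gamma β := Real.Gamma_pos_of_pos hβ0
  set φ : ℝ → ℝ → ℝ := fun r t => bF D r * r ^ (D - 1) * (t ^ (β - 1) * Real.exp (-(r ^ 2 * t)))
    with hφ
  have hin : ∀ r : ℝ, 0 < r → ∫ t in Ioi (0 : ℝ), (t ^ (β - 1) * Real.exp (-(r ^ 2 * t))) =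
      r ^ (s - D) * Real.Gamma β := by
    intro r hr
    rw [Real.integral_rpow_mul_exp_neg_mul_Ioi hβ0 (by positivity)]
    congr 1
    rw [one_div, Real.inv_rpow (by positivity), ← Real.rpow_neg (by positivity),
      ← Real.rpow_natCast r 2, ← Real.rpow_mul hr.le, hβ]
    congr 1
    push_cast; ring
  have hinI : ∀ r : ℝ, 0 < r →
      IntegrableOn (fun t : ℝ => t ^ (β - 1) * Real.exp (-(r ^ 2 * t))) (Ioi 0) := by
    intro r hr
    by_contra hcon
    have h := hin r hr
    rw [integral_undef hcon] at h
    have : 0 < r ^ (s - D) * Real.Gamma β := by positivity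
    linarith
  have hpow : ∀ r : ℝ, 0 < r → r ^ (D - 1) * r ^ (s - D) = r ^ (s - 1) := by
    intro r hr
    rw [← Real.rpow_add hr]; congr 1; ring
  have hφI : Integrable (Function.uncurry φ)
      ((volume.restrict (Ioi (0:ℝ))).prod (volume.restrict (Ioi (0:ℝ)))) := by
    have hm : Measurable (Function.uncurry φ) := by
      have : Measurable (bF D) := (bF_continuous (by linarith)).measurable
      simp only [hφ, Function.uncurry_def]
      fun_prop
    rw [integrable_prod_iff hm.aestronglyMeasurable]
    constructor
    · refine (ae_restrict_iff' measurableSet_Ioi).2 (Eventually.of_forall fun r hr => ?_)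
      exact (hinI r hr).const_mul (bF D r * r ^ (D - 1))
    · have h2 := (hint.norm).mul_const (Real.Gamma β)
      refine h2.congr ?_
      refine (ae_restrict_iff' measurableSet_Ioi).2 (Eventually.of_forall fun r hr => ?_)
      have hr : 0 < r := hr
      have : ∫ t in Ioi (0 : ℝ), ‖Function.uncurry φ (r, t)‖ = ∫ t in Ioi (0 : ℝ),
          |bF D r| * r ^ (D - 1) * (t ^ (β - 1) * Real.exp (-(r ^ 2 * t))) := by
        apply setIntegral_congr_fun measurableSet_Ioi
        intro t ht
        have ht : 0 < t := ht
        simp only [Function.uncurry_apply_pair, hφ, norm_mul, Real.norm_eq_abs]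
        rw [abs_of_pos (Real.rpow_pos_of_pos hr _), abs_of_pos (Real.rpow_pos_of_pos ht _),
          abs_of_pos (Real.exp_pos _)]
      beta_reduce
      rw [this, integral_const_mul, hin r hr, norm_mul, Real.norm_eq_abs, Real.norm_eq_abs,
        abs_of_pos (Real.rpow_pos_of_pos hr _), ← hpow r hr]
      ring
  have hsw := integral_integral_swap hφI
  have hL : ∫ r in Ioi (0 : ℝ), ∫ t in Ioi (0 : ℝ), φ r t =
      (∫ r in Ioi (0 : ℝ), bF D r * r ^ (s - 1)) * Real.Gamma β := by
    rw [← integral_mul_const]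
    apply setIntegral_congr_fun measurableSet_Ioi
    intro r hr
    have hr : 0 < r := hr
    simp only [hφ]
    rw [integral_const_mul, hin r hr, ← hpow r hr]
    ring
  have hR : ∫ t in Ioi (0 : ℝ), ∫ r in Ioi (0 : ℝ), φ r t =
      1 / 2 * (4 ^ (s / 2) * Real.Gamma (s / 2)) := by
    rw [← inv_gamma_integral (by linarith : 0 < s / 2), ← integral_const_mul]
    apply setIntegral_congr_fun measurableSet_Ioi
    intro t ht
    have ht : 0 < t := ht
    have h1 : ∫ r in Ioi (0 : ℝ), φ r t = ∫ r in Ioi (0 : ℝ),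
        t ^ (β - 1) * (bF D r * (r ^ (D - 1) * Real.exp (-t * r ^ (2 : ℝ)))) := by
      apply setIntegral_congr_fun measurableSet_Ioi
      intro r hr
      simp only [hφ]
      rw [Real.rpow_two, show -(r ^ 2 * t) = -t * r ^ 2 by ring]
      ring
    simp only
    rw [h1, integral_const_mul, bF_gauss (by linarith) ht,
      show -(s / 2) - 1 = (β - 1) + -(D / 2) by rw [hβ]; ring, Real.rpow_add ht]
    ring
  rw [hL, hR] at hsw
  have h4 : (4 : ℝ) ^ (s / 2) = 2 ^ s := by
    rw [show (4 : ℝ) = 2 ^ (2 : ℝ) by norm_num, ← Real.rpow_mul (by norm_num)]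
    congr 1; ring
  rw [eq_div_iff hg.ne', hsw, h4, Real.rpow_sub_one (by norm_num)]
  ring

lemma bF_decay_tendsto {D s : ℝ} (hD : 3 ≤ D) (hsD : s < (D - 1) / 2) :
    Tendsto (fun R => R ^ s * bF D R) atTop (nhds 0) := by
  obtain ⟨C, hC0, hC⟩ := bF_decay hD
  have h1 : Tendsto (fun R : ℝ => C * R ^ (-((D - 1) / 2 - s))) atTop (nhds 0) := by
    simpa using (tendsto_rpow_neg_atTop (y := (D - 1) / 2 - s) (by linarith)).const_mul C
  refine squeeze_zero_norm' ?_ h1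
  filter_upwards [eventually_gt_atTop 0] with R hR
  rw [norm_mul, Real.norm_eq_abs, Real.norm_eq_abs, abs_of_pos (Real.rpow_pos_of_pos hR _),
    show -((D - 1) / 2 - s) = s + -((D - 1) / 2) by ring, Real.rpow_add hR]
  have := mul_le_mul_of_nonneg_left (hC R hR) (Real.rpow_pos_of_pos hR s).le
  linarith

lemma bF_rpow_intervalIntegrable {D p a b : ℝ} (hD : 1 ≤ D) (hp : -1 < p) :
    IntervalIntegrable (fun r => bF D r * r ^ p) volume a b :=
  (intervalIntegral.intervalIntegrable_rpow' hp).continuousOn_mul (bF_continuous hD).continuousOn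

/-- conditional Mellin transform -/
lemma bF_mellin {D s : ℝ} (hD : 1 ≤ D) (hs : 0 < s) (hsD : s < (D + 1) / 2) :
    Tendsto (fun R : ℝ => ∫ r in (0:ℝ)..R, bF D r * r ^ (s - 1)) atTop
      (nhds (2 ^ (s - 1) * Real.Gamma (s / 2) / Real.Gamma ((D - s) / 2))) := by
  have hsD' : s < (D + 2 - 1) / 2 := by linarith
  have h1 := intervalIntegral_tendsto_integral_Ioi (l := atTop) (b := fun R : ℝ => R) 0
    (bF_abs_integrable (D := D + 2) (by linarith) hs hsD') tendsto_id
  rw [bF_mellin_abs (D := D + 2) (by linarith) hs hsD'] at h1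
  have h2 := (bF_decay_tendsto (D := D + 2) (by linarith) hsD').div_const 2
  have h3 := h2.add (h1.const_mul ((D - s) / 2))
  have hval : 0 / 2 + (D - s) / 2 * (2 ^ (s - 1) * Real.Gamma (s / 2) /
      Real.Gamma ((D + 2 - s) / 2)) = 2 ^ (s - 1) * Real.Gamma (s / 2) / Real.Gamma ((D - s) / 2) := by
    have hp : 0 < (D - s) / 2 := by linarith
    rw [show (D + 2 - s) / 2 = (D - s) / 2 + 1 by ring, Real.Gamma_add_one hp.ne']
    have := Real.Gamma_pos_of_pos hp
    have : D - s ≠ 0 := by linarith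
    field_simp
    ring
  rw [hval] at h3
  refine h3.congr' ?_
  filter_upwards [eventually_gt_atTop 0] with R hR
  have hi1 : IntervalIntegrable (fun r => bF D r * r ^ (s - 1)) volume 0 R :=
    bF_rpow_intervalIntegrable hD (by linarith)
  have hi2 : IntervalIntegrable (fun r => bF (D + 2) r * r ^ (s - 1)) volume 0 R :=
    bF_rpow_intervalIntegrable (by linarith) (by linarith)
  have hftc := intervalIntegral.integral_eq_sub_of_hasDerivAt_of_le (a := 0) (b := R)
    (f := fun r => r ^ s * bF (D + 2) r / 2)
    (f' := fun r => bF D r * r ^ (s - 1) - (D - s) / 2 * (bF (D + 2) r * r ^ (s - 1))) hR.le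
    (((Real.continuous_rpow_const hs.le).mul (bF_continuous (by linarith))).div_const 2).continuousOn
    (by
      intro x hx
      have hx0 : 0 < x := hx.1
      have h := ((Real.hasDerivAt_rpow_const (p := s) (Or.inl hx0.ne')).mul
        (bF_hasDerivAt (D := D + 2) (by linarith) x)).div_const 2
      refine h.congr_deriv ?_
      rw [bF_rec hD x, show D + 2 + 2 = D + 4 by ring, Real.rpow_sub_one hx0.ne']
      field_simp
      ring)
    (hi1.sub (hi2.const_mul _))
  rw [intervalIntegral.integral_sub hi1 (hi2.const_mul _), intervalIntegral.integral_const_mul,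
    Real.zero_rpow hs.ne'] at hftc
  linarith

lemma rpow_le_of_comparable {x y c p : ℝ} (hx : 0 < x) (hxy : x ≤ y) (hc : 1 ≤ c) (hyc : y ≤ c * x) :
    y ^ p ≤ c ^ |p| * x ^ p := by
  have hy : 0 < y := hx.trans_le hxy
  rcases le_total 0 p with h | h
  · rw [abs_of_nonneg h, ← Real.mul_rpow (by linarith) hx.le]
    exact Real.rpow_le_rpow hy.le hyc h
  · have h1 : y ^ p ≤ x ^ p := Real.rpow_le_rpow_of_nonpos hx hxy h
    have h2 : 1 ≤ c ^ |p| := Real.one_le_rpow hc (abs_nonneg p)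
    have h3 : 0 < x ^ p := Real.rpow_pos_of_pos hx p
    nlinarith

/-- tail kernel after integration by parts -/
noncomputable def tailK (D s ε r : ℝ) : ℝ :=
  bF (D + 2) r / 2 * ((1 - D) * (r + ε) ^ (s - 1) + (s - 1) * r * (r + ε) ^ (s - 2))

lemma tailK_continuousOn {D s ε δ : ℝ} (hD : 1 ≤ D) (hδ : 0 < δ) (hε : 0 ≤ ε) :
    ContinuousOn (tailK D s ε) (Ici δ) := by
  unfold tailK
  have h0 : ∀ x ∈ Ici δ, x + ε ≠ 0 := fun x hx => by
    have : δ ≤ x := hx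
    linarith
  have h1 : ∀ p : ℝ, ContinuousOn (fun r : ℝ => (r + ε) ^ p) (Ici δ) := fun p =>
    (continuousOn_id.add continuousOn_const).rpow_const fun x hx => Or.inl (h0 x hx)
  exact ((bF_continuous (by linarith)).continuousOn.div_const 2).mul
    ((continuousOn_const.mul (h1 _)).add ((continuousOn_const.mul continuousOn_id).mul (h1 _)))

lemma tailK_bound {D s δ E : ℝ} (hD : 1 ≤ D) (hδ : 0 < δ) (hE : 0 ≤ E) :
    ∃ C, ∀ ε, 0 ≤ ε → ε ≤ E → ∀ r, δ ≤ r →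
      |tailK D s ε r| ≤ C * r ^ (s - 1 - (D + 1) / 2) ∧
      |r * bF (D + 2) r * (r + ε) ^ (s - 1) / 2| ≤ C * r ^ (s - (D + 1) / 2) := by
  obtain ⟨C, hC0, hC⟩ := bF_decay (D := D + 2) (by linarith)
  set c : ℝ := 1 + E / δ with hc
  have hc1 : 1 ≤ c := by rw [hc]; have : 0 ≤ E / δ := by positivity
                         linarith
  refine ⟨C * c ^ |s - 1| * (|1 - D| + |s - 1| + 1), fun ε hε hεE r hr => ?_⟩
  have hr0 : 0 < r := by linarith
  have hrε : 0 < r + ε := by linarith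
  have hcmp : r + ε ≤ c * r := by
    have h1 : ε ≤ E / δ * r := by
      rw [div_mul_eq_mul_div, le_div_iff₀ hδ]
      exact mul_le_mul hεE hr hδ.le hE
    rw [hc]; linarith
  have hp := rpow_le_of_comparable (p := s - 1) hr0 (by linarith : r ≤ r + ε) hc1 hcmp
  have hb := hC r hr0
  rw [show -((D + 2 - 1) / 2) = -((D + 1) / 2) by ring] at hb
  set A := (r + ε) ^ (s - 1) with hA
  have hA0 : 0 < A := Real.rpow_pos_of_pos hrε _
  have e2 : r * (r + ε) ^ (s - 2) ≤ A := by
    rw [show s - 2 = s - 1 - 1 by ring, Real.rpow_sub_one hrε.ne', ← hA, mul_div_assoc',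
      div_le_iff₀ hrε]
    nlinarith
  have e20 : 0 < r * (r + ε) ^ (s - 2) := by positivity
  have hbA : |bF (D + 2) r| * A ≤ C * c ^ |s - 1| * r ^ (s - 1 - (D + 1) / 2) := by
    calc |bF (D + 2) r| * A ≤ (C * r ^ (-((D + 1) / 2))) * (c ^ |s - 1| * r ^ (s - 1)) := by
          gcongr
      _ = C * c ^ |s - 1| * (r ^ (s - 1) * r ^ (-((D + 1) / 2))) := by ring
      _ = _ := by rw [← Real.rpow_add hr0]; rfl
  have hQ : 0 ≤ C * c ^ |s - 1| * r ^ (s - 1 - (D + 1) / 2) := by positivity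
  constructor
  · unfold tailK
    rw [abs_mul, abs_div, abs_two]
    have h3 : |(1 - D) * A + (s - 1) * r * (r + ε) ^ (s - 2)| ≤ (|1 - D| + |s - 1|) * A := by
      refine (abs_add_le _ _).trans ?_
      rw [abs_mul, mul_assoc, abs_mul (s - 1), abs_of_pos hA0, abs_of_pos e20, add_mul]
      gcongr
    calc |bF (D + 2) r| / 2 * |(1 - D) * A + (s - 1) * r * (r + ε) ^ (s - 2)|
        ≤ |bF (D + 2) r| / 2 * ((|1 - D| + |s - 1|) * A) := by gcongr
      _ = (|bF (D + 2) r| * A) * ((|1 - D| + |s - 1|) / 2) := by ring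
      _ ≤ (C * c ^ |s - 1| * r ^ (s - 1 - (D + 1) / 2)) * (|1 - D| + |s - 1| + 1) := by
          apply mul_le_mul hbA _ (by positivity) hQ
          linarith [abs_nonneg (1 - D), abs_nonneg (s - 1)]
      _ = _ := by ring
  · rw [abs_div, abs_mul, abs_mul, abs_of_pos hr0, abs_of_pos hA0, abs_two]
    calc r * |bF (D + 2) r| * A / 2 = (|bF (D + 2) r| * A) * (r / 2) := by ring
      _ ≤ (C * c ^ |s - 1| * r ^ (s - 1 - (D + 1) / 2)) * (r * (|1 - D| + |s - 1| + 1)) := by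
          apply mul_le_mul hbA _ (by positivity) hQ
          have : 0 ≤ |1 - D| + |s - 1| := by positivity
          nlinarith
      _ = C * c ^ |s - 1| * (|1 - D| + |s - 1| + 1) * (r ^ (s - 1 - (D + 1) / 2) * r) := by ring
      _ = _ := by
          rw [← Real.rpow_add_one hr0.ne']
          congr 2; ring

lemma tailK_integrable {D s ε δ : ℝ} (hD : 1 ≤ D) (hsD : s < (D + 1) / 2) (hδ : 0 < δ) (hε : 0 ≤ ε) :
    IntegrableOn (tailK D s ε) (Ioi δ) := by
  obtain ⟨C, hC⟩ := tailK_bound (s := s) hD hδ hε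
  have h1 : IntegrableOn (fun r : ℝ => C * r ^ (s - 1 - (D + 1) / 2)) (Ioi δ) :=
    (integrableOn_Ioi_rpow_of_lt (by linarith) hδ).const_mul C
  refine Integrable.mono' h1 (((tailK_continuousOn hD hδ hε).mono
    Ioi_subset_Ici_self).aestronglyMeasurable measurableSet_Ioi) ?_
  exact (ae_restrict_iff' measurableSet_Ioi).2 (Eventually.of_forall fun r hr =>
    (hC ε hε le_rfl r (le_of_lt hr)).1)

lemma tail_tendsto {D s ε δ : ℝ} (hD : 1 ≤ D) (hsD : s < (D + 1) / 2) (hδ : 0 < δ) (hε : 0 ≤ ε) :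
    Tendsto (fun R : ℝ => ∫ r in δ..R, bF D r * (r + ε) ^ (s - 1)) atTop
      (nhds (-(δ * bF (D + 2) δ * (δ + ε) ^ (s - 1) / 2) - ∫ r in Ioi δ, tailK D s ε r)) := by
  obtain ⟨C, hC⟩ := tailK_bound (s := s) hD hδ hε
  have hB : Tendsto (fun R : ℝ => R * bF (D + 2) R * (R + ε) ^ (s - 1) / 2) atTop (nhds 0) := by
    have h1 : Tendsto (fun R : ℝ => C * R ^ (-((D + 1) / 2 - s))) atTop (nhds 0) := by
      simpa using (tendsto_rpow_neg_atTop (y := (D + 1) / 2 - s) (by linarith)).const_mul C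
    refine squeeze_zero_norm' ?_ h1
    filter_upwards [eventually_ge_atTop δ] with R hR
    rw [neg_sub]
    exact (hC ε hε le_rfl R hR).2
  have hK := intervalIntegral_tendsto_integral_Ioi (l := atTop) (b := fun R : ℝ => R) δ
    (tailK_integrable (s := s) hD hsD hδ hε) tendsto_id
  have h3 := (hB.sub_const (δ * bF (D + 2) δ * (δ + ε) ^ (s - 1) / 2)).sub hK
  rw [zero_sub] at h3
  refine h3.congr' ?_
  filter_upwards [eventually_ge_atTop δ] with R hR
  have hpc : ContinuousOn (fun r : ℝ => (r + ε) ^ (s - 1)) (Icc δ R) :=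
    (continuousOn_id.add continuousOn_const).rpow_const fun x hx => Or.inl (by
      have := hx.1
      have h : 0 < x + ε := by linarith
      exact h.ne')
  have hi1 : IntervalIntegrable (fun r => bF D r * (r + ε) ^ (s - 1)) volume δ R := by
    apply ContinuousOn.intervalIntegrable_of_Icc hR
    exact (bF_continuous hD).continuousOn.mul hpc
  have hi2 : IntervalIntegrable (tailK D s ε) volume δ R := by
    apply ContinuousOn.intervalIntegrable_of_Icc hR
    exact (tailK_continuousOn hD hδ hε).mono Icc_subset_Ici_self
  have hftc := intervalIntegral.integral_eq_sub_of_hasDerivAt_of_le (a := δ) (b := R)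
    (f := fun r => r * bF (D + 2) r * (r + ε) ^ (s - 1) / 2)
    (f' := fun r => bF D r * (r + ε) ^ (s - 1) + tailK D s ε r) hR
    (((continuousOn_id.mul (bF_continuous (by linarith)).continuousOn).mul hpc).div_const 2)
    (by
      intro x hx
      have hx0 : 0 < x := hδ.trans hx.1
      have hxe : x + ε ≠ 0 := by linarith
      have h := (((hasDerivAt_id x).mul (bF_hasDerivAt (D := D + 2) (by linarith) x)).mul
        (((hasDerivAt_id x).add_const ε).rpow_const (p := s - 1) (Or.inl hxe))).div_const 2
      refine h.congr_deriv ?_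
      simp only [id, Pi.mul_apply, tailK]
      rw [bF_rec hD x, show D + 2 + 2 = D + 4 by ring, show s - 1 - 1 = s - 2 by ring]
      ring)
    (hi1.add hi2)
  rw [intervalIntegral.integral_add hi1 hi2] at hftc
  linarith

lemma tail_eps {D s δ : ℝ} (hD : 1 ≤ D) (hsD : s < (D + 1) / 2) (hδ : 0 < δ) :
    Tendsto (fun ε : ℝ => -(δ * bF (D + 2) δ * (δ + ε) ^ (s - 1) / 2) - ∫ r in Ioi δ, tailK D s ε r)
      (nhdsWithin 0 (Ioi 0))
      (nhds (-(δ * bF (D + 2) δ * (δ + 0) ^ (s - 1) / 2) - ∫ r in Ioi δ, tailK D s 0 r)) := by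
  have hpt : ∀ p r : ℝ, 0 < r → Tendsto (fun ε : ℝ => (r + ε) ^ p) (nhdsWithin 0 (Ioi 0))
      (nhds ((r + 0) ^ p)) := by
    intro p r hr
    have h1 : ContinuousAt (fun ε : ℝ => (r + ε) ^ p) 0 :=
      (continuousAt_const.add continuousAt_id).rpow_const (Or.inl (by simpa using hr.ne'))
    exact h1.tendsto.mono_left nhdsWithin_le_nhds
  apply Tendsto.sub
  · exact (((hpt _ δ hδ).const_mul _).div_const 2).neg
  · obtain ⟨C, hC⟩ := tailK_bound (s := s) (E := 1) hD hδ zero_le_one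
    have hev : ∀ᶠ ε : ℝ in nhdsWithin 0 (Ioi 0), 0 ≤ ε ∧ ε ≤ 1 := by
      filter_upwards [Ioc_mem_nhdsGT (zero_lt_one : (0:ℝ) < 1)] with ε hε
      exact ⟨hε.1.le, hε.2⟩
    refine tendsto_integral_filter_of_dominated_convergence
      (fun r : ℝ => C * r ^ (s - 1 - (D + 1) / 2)) ?_ ?_
      ((integrableOn_Ioi_rpow_of_lt (by linarith) hδ).const_mul C) ?_
    · filter_upwards [hev] with ε hε
      exact ((tailK_continuousOn hD hδ hε.1).mono
        Ioi_subset_Ici_self).aestronglyMeasurable measurableSet_Ioi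
    · filter_upwards [hev] with ε hε
      exact (ae_restrict_iff' measurableSet_Ioi).2 (Eventually.of_forall fun r hr =>
        (hC ε hε.1 hε.2 r (le_of_lt hr)).1)
    · refine (ae_restrict_iff' measurableSet_Ioi).2 (Eventually.of_forall fun r hr => ?_)
      have hr0 : 0 < r := hδ.trans hr
      unfold tailK
      exact (((hpt _ r hr0).const_mul _).add ((hpt _ r hr0).const_mul _)).const_mul _

/-- domination near zero -/
lemma head_bound {D s δ : ℝ} (hD : 1 ≤ D) (hδ : 0 < δ) :
    ∃ C, ∀ ε, 0 ≤ ε → ε ≤ 1 → ∀ r, r ∈ Ioc 0 δ →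
      ‖(bF D r - bF D 0) * (r + ε) ^ (s - 1)‖ ≤ C * (r ^ (s + 1) + 1) := by
  set K := (Real.Gamma ((D + 2) / 2))⁻¹ with hK
  have hK0 : 0 < K := inv_pos.2 (Real.Gamma_pos_of_pos (by linarith))
  refine ⟨K * (1 + δ ^ 2 * (δ + 1) ^ (s - 1)), fun ε hε hε1 r hr => ?_⟩
  have hr0 : 0 < r := hr.1
  have h1 := bF_sub_zero_le hD hr0.le
  have hP : 0 < (r + ε) ^ (s - 1) := Real.rpow_pos_of_pos (by linarith) _
  have hd : 0 < δ ^ 2 * (δ + 1) ^ (s - 1) := by positivity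
  have hrp : 0 < r ^ (s + 1) := by positivity
  have h2 : r ^ 2 * (r + ε) ^ (s - 1) ≤ r ^ (s + 1) + δ ^ 2 * (δ + 1) ^ (s - 1) := by
    rcases le_total 0 (s - 1) with h | h
    · have h3 : (r + ε) ^ (s - 1) ≤ (δ + 1) ^ (s - 1) :=
        Real.rpow_le_rpow (by linarith) (by linarith [hr.2]) h
      have h4 : r ^ 2 ≤ δ ^ 2 := pow_le_pow_left₀ hr0.le hr.2 2
      have := mul_le_mul h4 h3 hP.le (by positivity)
      linarith
    · have h3 : (r + ε) ^ (s - 1) ≤ r ^ (s - 1) :=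
        Real.rpow_le_rpow_of_nonpos hr0 (by linarith) h
      have h4 : r ^ 2 * r ^ (s - 1) = r ^ (s + 1) := by
        rw [← Real.rpow_natCast r 2, ← Real.rpow_add hr0]; congr 1; push_cast; ring
      have := mul_le_mul_of_nonneg_left h3 (sq_nonneg r)
      linarith
  rw [norm_mul, Real.norm_eq_abs, Real.norm_eq_abs, abs_of_pos hP]
  calc |bF D r - bF D 0| * (r + ε) ^ (s - 1) ≤ K * r ^ 2 * (r + ε) ^ (s - 1) := by gcongr
    _ = K * (r ^ 2 * (r + ε) ^ (s - 1)) := by ring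
    _ ≤ K * (r ^ (s + 1) + δ ^ 2 * (δ + 1) ^ (s - 1)) := by gcongr
    _ ≤ K * ((1 + δ ^ 2 * (δ + 1) ^ (s - 1)) * (r ^ (s + 1) + 1)) := by
        gcongr
        nlinarith
    _ = _ := by ring

lemma head_bound_integrable {s δ C : ℝ} (hs : -2 < s) (hδ : 0 < δ) :
    IntegrableOn (fun r : ℝ => C * (r ^ (s + 1) + 1)) (Ioc 0 δ) := by
  have := ((intervalIntegral.intervalIntegrable_rpow' (a := 0) (b := δ)
    (r := s + 1) (by linarith)).add (intervalIntegrable_const (c := (1:ℝ)))).const_mul C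
  rwa [intervalIntegrable_iff_integrableOn_Ioc_of_le hδ.le] at this

lemma head_meas {D s ε δ : ℝ} (hD : 1 ≤ D) :
    AEStronglyMeasurable (fun r => (bF D r - bF D 0) * (r + ε) ^ (s - 1))
      (volume.restrict (Ioc 0 δ)) := by
  have : Measurable (bF D) := (bF_continuous (by linarith)).measurable
  have : Measurable (fun r => (bF D r - bF D 0) * (r + ε) ^ (s - 1)) := by fun_prop
  exact this.aestronglyMeasurable

lemma head_integrable_zero {D s δ : ℝ} (hD : 1 ≤ D) (hs : -2 < s) (hδ : 0 < δ) :
    IntegrableOn (fun r => (bF D r - bF D 0) * (r + 0) ^ (s - 1)) (Ioc 0 δ) := by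
  obtain ⟨C, hC⟩ := head_bound (s := s) hD hδ
  refine Integrable.mono' (head_bound_integrable (C := C) hs hδ) (head_meas hD) ?_
  exact (ae_restrict_iff' measurableSet_Ioc).2 (Eventually.of_forall fun r hr =>
        hC 0 le_rfl zero_le_one r hr)

lemma head_eps {D s δ : ℝ} (hD : 1 ≤ D) (hs : -2 < s) (hδ : 0 < δ) :
    Tendsto (fun ε : ℝ => ∫ r in Ioc 0 δ, (bF D r - bF D 0) * (r + ε) ^ (s - 1))
      (nhdsWithin 0 (Ioi 0))
      (nhds (∫ r in Ioc 0 δ, (bF D r - bF D 0) * (r + 0) ^ (s - 1))) := by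
  obtain ⟨C, hC⟩ := head_bound (s := s) hD hδ
  refine tendsto_integral_filter_of_dominated_convergence
      (fun r : ℝ => C * (r ^ (s + 1) + 1)) ?_ ?_ (head_bound_integrable (C := C) hs hδ) ?_
  · exact Eventually.of_forall fun ε => head_meas hD
  · filter_upwards [Ioc_mem_nhdsGT (zero_lt_one : (0:ℝ) < 1)] with ε hε
    exact (ae_restrict_iff' measurableSet_Ioc).2 (Eventually.of_forall fun r hr =>
        hC ε hε.1.le hε.2 r hr)
  · refine (ae_restrict_iff' measurableSet_Ioc).2 (Eventually.of_forall fun r hr => ?_)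
    have h1 : ContinuousAt (fun ε : ℝ => (r + ε) ^ (s - 1)) 0 :=
      (continuousAt_const.add continuousAt_id).rpow_const (Or.inl (by simpa using hr.1.ne'))
    exact (h1.tendsto.mono_left nhdsWithin_le_nhds).const_mul _

/-- closed form of the regularised integral -/
noncomputable def regI (D s δ ε : ℝ) : ℝ :=
  (∫ r in Ioc 0 δ, (bF D r - bF D 0) * (r + ε) ^ (s - 1)) +
    (-(δ * bF (D + 2) δ * (δ + ε) ^ (s - 1) / 2) - ∫ r in Ioi δ, tailK D s ε r)

lemma regI_eps {D s δ : ℝ} (hD : 1 ≤ D) (hs : -2 < s) (hsD : s < (D + 1) / 2) (hδ : 0 < δ) :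
    Tendsto (regI D s δ) (nhdsWithin 0 (Ioi 0)) (nhds (regI D s δ 0)) :=
  (head_eps hD hs hδ).add (tail_eps hD hsD hδ)

lemma regI_tendsto {D s δ ε : ℝ} (hD : 1 ≤ D) (hsD : s < (D + 1) / 2) (hδ : 0 < δ) (hε : 0 < ε) :
    Tendsto (fun R : ℝ => ∫ r in Ioc (0:ℝ) R,
      (bF D r - Set.indicator (Set.Icc (0 : ℝ) δ) (fun _ => (1 : ℝ)) r * bF D 0) *
        (r + ε) ^ (s - 1)) atTop (nhds (regI D s δ ε)) := by
  have h1 := (tail_tendsto hD hsD hδ hε.le).const_add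
    (∫ r in Ioc 0 δ, (bF D r - bF D 0) * (r + ε) ^ (s - 1))
  refine Tendsto.congr' ?_ h1
  filter_upwards [eventually_ge_atTop δ] with R hR
  have hpc : ContinuousOn (fun r : ℝ => (r + ε) ^ (s - 1)) (Ici 0) :=
    (continuousOn_id.add continuousOn_const).rpow_const fun x hx => Or.inl (by
      have : 0 ≤ x := hx
      have : 0 < x + ε := by linarith
      exact this.ne')
  have e1 : EqOn (fun r => (bF D r - Set.indicator (Set.Icc (0 : ℝ) δ) (fun _ => (1 : ℝ)) r * bF D 0) *
        (r + ε) ^ (s - 1)) (fun r => (bF D r - bF D 0) * (r + ε) ^ (s - 1)) (Ioc 0 δ) := by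
    intro r hr
    simp only
    rw [indicator_of_mem (Ioc_subset_Icc_self hr), one_mul]
  have e2 : EqOn (fun r => (bF D r - Set.indicator (Set.Icc (0 : ℝ) δ) (fun _ => (1 : ℝ)) r * bF D 0) *
        (r + ε) ^ (s - 1)) (fun r => bF D r * (r + ε) ^ (s - 1)) (Ioc δ R) := by
    intro r hr
    simp only
    rw [indicator_of_notMem (fun h => absurd hr.1 (not_lt.2 h.2)), zero_mul, sub_zero]
  have i1 : IntegrableOn (fun r => (bF D r - bF D 0) * (r + ε) ^ (s - 1)) (Ioc 0 δ) :=
    ((((bF_continuous hD).sub continuous_const).continuousOn.mul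
      (hpc.mono Icc_subset_Ici_self)).integrableOn_Icc).mono_set Ioc_subset_Icc_self
  have i2 : IntegrableOn (fun r => bF D r * (r + ε) ^ (s - 1)) (Ioc δ R) :=
    (((bF_continuous hD).continuousOn.mul
      (hpc.mono (Icc_subset_Ici_self.trans (Ici_subset_Ici.2 hδ.le)))).integrableOn_Icc).mono_set
        Ioc_subset_Icc_self
  rw [← Ioc_union_Ioc_eq_Ioc hδ.le hR, setIntegral_union (Ioc_disjoint_Ioc_of_le le_rfl)
    measurableSet_Ioc ((integrableOn_congr_fun e1 measurableSet_Ioc).2 i1)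
    ((integrableOn_congr_fun e2 measurableSet_Ioc).2 i2),
    setIntegral_congr_fun measurableSet_Ioc e1, setIntegral_congr_fun measurableSet_Ioc e2,
    intervalIntegral.integral_of_le hR]

lemma regI_zero_pos {D s δ : ℝ} (hD : 1 ≤ D) (hs : 0 < s) (hsD : s < (D + 1) / 2) (hδ : 0 < δ) :
    regI D s δ 0 = 2 ^ (s - 1) * Real.Gamma (s / 2) / Real.Gamma ((D - s) / 2) -
      bF D 0 * (δ ^ s / s) := by
  have h1 := (tail_tendsto hD hsD hδ le_rfl).const_add
    (∫ r in Ioc 0 δ, (bF D r - bF D 0) * (r + 0) ^ (s - 1))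
  refine tendsto_nhds_unique h1 ?_
  refine Tendsto.congr' ?_ ((bF_mellin hD hs hsD).sub_const (bF D 0 * (δ ^ s / s)))
  filter_upwards [eventually_ge_atTop δ] with R hR
  simp only [add_zero]
  have hi : ∀ a b, IntervalIntegrable (fun r => bF D r * r ^ (s - 1)) volume a b := fun a b =>
    bF_rpow_intervalIntegrable hD (by linarith)
  rw [← intervalIntegral.integral_of_le hδ.le]
  simp only [sub_mul]
  rw [intervalIntegral.integral_sub (hi _ _)
    ((intervalIntegral.intervalIntegrable_rpow' (by linarith)).const_mul _),
    intervalIntegral.integral_const_mul, integral_rpow (Or.inl (by linarith)),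
    ← intervalIntegral.integral_add_adjacent_intervals (hi 0 δ) (hi δ R), sub_add_cancel,
    Real.zero_rpow hs.ne']
  ring

lemma regI_zero_neg {D s δ : ℝ} (hD : 1 ≤ D) (hs : -2 < s) (hs0 : s < 0) (hδ : 0 < δ) :
    regI D s δ 0 = 2 ^ (s - 1) * Real.Gamma (s / 2) / Real.Gamma ((D - s) / 2) -
      bF D 0 * (δ ^ s / s) := by
  have h1 := (tail_tendsto (s := s) hD (by linarith) hδ le_rfl).const_add
    (∫ r in Ioc 0 δ, (bF D r - bF D 0) * (r + 0) ^ (s - 1))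
  refine tendsto_nhds_unique h1 ?_
  have hM := bF_mellin (D := D + 2) (s := s + 2) (by linarith) (by linarith) (by linarith)
  have hbd : Tendsto (fun R => bF D R * R ^ s / s) atTop (nhds 0) := by
    have h2 : Tendsto (fun R : ℝ => (Real.Gamma (D / 2))⁻¹ * R ^ (- -s) / (-s)) atTop (nhds 0) := by
      simpa using ((tendsto_rpow_neg_atTop (y := -s) (by linarith)).const_mul
        (Real.Gamma (D / 2))⁻¹).div_const (-s)
    refine squeeze_zero_norm' ?_ h2
    filter_upwards [eventually_gt_atTop 0] with R hR
    rw [neg_neg, norm_div, norm_mul, Real.norm_eq_abs, Real.norm_eq_abs, Real.norm_eq_abs,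
      abs_of_pos (Real.rpow_pos_of_pos hR _), abs_of_neg hs0]
    have := bF_bounded hD hR.le
    have : 0 < -s := by linarith
    gcongr
  have hT := (hbd.sub_const (bF D 0 * (δ ^ s / s))).add (hM.const_mul (1 / (2 * s)))
  have hval : 0 - bF D 0 * (δ ^ s / s) + 1 / (2 * s) * (2 ^ (s + 2 - 1) * Real.Gamma ((s + 2) / 2) /
      Real.Gamma ((D + 2 - (s + 2)) / 2)) =
      2 ^ (s - 1) * Real.Gamma (s / 2) / Real.Gamma ((D - s) / 2) - bF D 0 * (δ ^ s / s) := by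
    rw [show (s + 2) / 2 = s / 2 + 1 by ring, Real.Gamma_add_one (by linarith),
      show D + 2 - (s + 2) = D - s by ring, show s + 2 - 1 = (s - 1) + (2 : ℕ) by push_cast; ring,
      Real.rpow_add_natCast (by norm_num)]
    have := Real.Gamma_pos_of_pos (by linarith : 0 < (D - s) / 2)
    have := hs0.ne
    field_simp
    ring
  rw [hval] at hT
  refine Tendsto.congr' ?_ hT
  filter_upwards [eventually_ge_atTop δ] with R hR
  simp only [add_zero, show s + 2 - 1 = s + 1 by ring]
  have hi : ∀ a b, IntervalIntegrable (fun r => bF (D + 2) r * r ^ (s + 1)) volume a b := fun a b =>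
    bF_rpow_intervalIntegrable (by linarith) (by linarith)
  have hA : IntervalIntegrable (fun r => (bF D r - bF D 0) * r ^ (s - 1)) volume 0 δ := by
    have := head_integrable_zero hD hs hδ
    simp only [add_zero] at this
    rwa [intervalIntegrable_iff_integrableOn_Ioc_of_le hδ.le]
  have hB : IntervalIntegrable (fun r => bF D r * r ^ (s - 1)) volume δ R := by
    apply ContinuousOn.intervalIntegrable_of_Icc hR
    exact (bF_continuous hD).continuousOn.mul
      (continuousOn_id.rpow_const fun x hx => Or.inl (hδ.trans_le hx.1).ne')
  have hdx : ∀ c x : ℝ, 0 < x → HasDerivAt (fun r => (bF D r - c) * r ^ s / s)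
      ((bF D x - c) * x ^ (s - 1) - 1 / (2 * s) * (bF (D + 2) x * x ^ (s + 1))) x := by
    intro c x hx
    have h := (((bF_hasDerivAt hD x).sub_const c).mul
      (Real.hasDerivAt_rpow_const (p := s) (Or.inl hx.ne'))).div_const s
    refine h.congr_deriv ?_
    rw [Real.rpow_sub_one hx.ne', Real.rpow_add_one hx.ne']
    have := hs0.ne
    field_simp
    ring
  have hcont0 : ContinuousOn (fun r => (bF D r - bF D 0) * r ^ s / s) (Icc 0 δ) := by
    intro x hx
    rcases eq_or_lt_of_le hx.1 with h | h
    · subst h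
      set K := (Real.Gamma ((D + 2) / 2))⁻¹ with hK
      have hz : Tendsto (fun r : ℝ => K * r ^ (s + 2) / (-s)) (nhdsWithin 0 (Icc 0 δ)) (nhds 0) := by
        have : Continuous (fun r : ℝ => K * r ^ (s + 2) / (-s)) :=
          (continuous_const.mul (Real.continuous_rpow_const (by linarith))).div_const _
        have h := (this.tendsto 0).mono_left (nhdsWithin_le_nhds (s := Icc 0 δ))
        simpa [Real.zero_rpow (by linarith : s + 2 ≠ 0)] using h
      unfold ContinuousWithinAt
      simp only [sub_self, zero_mul, zero_div]
      refine squeeze_zero_norm' ?_ hz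
      filter_upwards [self_mem_nhdsWithin] with r hr
      rcases eq_or_lt_of_le hr.1 with h0 | h0
      · subst h0
        simp [Real.zero_rpow (by linarith : s + 2 ≠ 0)]
      · rw [norm_div, norm_mul, Real.norm_eq_abs, Real.norm_eq_abs, Real.norm_eq_abs,
          abs_of_pos (Real.rpow_pos_of_pos h0 _), abs_of_neg hs0,
          show s + 2 = s + (2 : ℕ) by push_cast; ring, Real.rpow_add_natCast h0.ne']
        have h3 := bF_sub_zero_le hD h0.le
        have : 0 < -s := by linarith
        have := mul_le_mul_of_nonneg_right h3 (Real.rpow_pos_of_pos h0 s).le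
        refine div_le_div_of_nonneg_right (this.trans (le_of_eq ?_)) (by linarith)
        rw [hK]; ring
    · exact (hdx (bF D 0) x h).continuousAt.continuousWithinAt
  have f1 := intervalIntegral.integral_eq_sub_of_hasDerivAt_of_le hδ.le hcont0
    (fun x hx => hdx (bF D 0) x hx.1) (hA.sub ((hi 0 δ).const_mul _))
  have f2 := intervalIntegral.integral_eq_sub_of_hasDerivAt_of_le (a := δ) (b := R)
    (f := fun r => (bF D r - 0) * r ^ s / s) hR
    (fun x hx => (hdx 0 x (hδ.trans_le hx.1)).continuousAt.continuousWithinAt)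
    (fun x hx => hdx 0 x (hδ.trans hx.1)) (by
      simp only [sub_zero]
      exact hB.sub ((hi δ R).const_mul _))
  simp only [sub_zero] at f2
  rw [intervalIntegral.integral_sub hA ((hi 0 δ).const_mul _),
    intervalIntegral.integral_const_mul] at f1
  rw [intervalIntegral.integral_sub hB ((hi δ R).const_mul _),
    intervalIntegral.integral_const_mul] at f2
  simp only [sub_self, zero_mul, zero_div, sub_zero] at f1
  rw [← intervalIntegral.integral_of_le hδ.le,
    ← intervalIntegral.integral_add_adjacent_intervals (hi 0 δ) (hi δ R)]
  have e : (bF D δ - bF D 0) * δ ^ s / s = bF D δ * δ ^ s / s - bF D 0 * (δ ^ s / s) := by ring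
  rw [e] at f1
  linarith

lemma besselJ_eq_bF (D : ℝ) {x : ℝ} (hx : 0 < x) :
    (2 / x) ^ ((D - 2) / 2) * besselJ ((D - 2) / 2) x = bF D x := by
  unfold besselJ bF bG
  rw [← tsum_mul_left]
  apply tsum_congr
  intro m
  have hx2 : 0 < x / 2 := by positivity
  rw [Real.rpow_add hx2, show (2 * (m : ℝ)) = ((2 * m : ℕ) : ℝ) by push_cast; ring,
    Real.rpow_natCast, show (D - 2) / 2 + (m : ℝ) + 1 = D / 2 + m by ring,
    show 2 / x = (x / 2)⁻¹ by rw [inv_div], Real.inv_rpow hx2.le, pow_mul,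
    show (x / 2) ^ 2 = x ^ 2 / 4 by ring]
  have := (Real.rpow_pos_of_pos hx2 ((D - 2) / 2)).ne'
  field_simp

theorem epsilon_limit_formula
    (d : ℕ) (hd : 1 ≤ d) (δ k α : ℝ) (hδ : 0 < δ) (hk : 0 < k)
    (hα : α ∈ Set.Ioo (((d : ℝ) - 1) / 2) ((d : ℝ) + 2)) (hαd : α ≠ (d : ℝ)) :
    ∃ I : ℝ → ℝ,
      (∀ ε ∈ Set.Ioi (0 : ℝ),
        Filter.Tendsto
          (fun R : ℝ =>
            ∫ r in Set.Ioc (0 : ℝ) R,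
              ((2 / (k * r)) ^ (((d : ℝ) - 2) / 2) * besselJ (((d : ℝ) - 2) / 2) (k * r) -
                  Set.indicator (Set.Icc (0 : ℝ) δ) (fun _ => (1 : ℝ)) r /
                    Real.Gamma ((d : ℝ) / 2)) *
                (r + ε) ^ ((d : ℝ) - 1 - α))
          Filter.atTop (nhds (I ε))) ∧
      Filter.Tendsto I (nhdsWithin 0 (Set.Ioi 0))
        (nhds ((k / 2) ^ (α - (d : ℝ)) * Real.Gamma (((d : ℝ) - α) / 2) /
            (2 * Real.Gamma (α / 2)) -
          δ ^ ((d : ℝ) - α) / (((d : ℝ) - α) * Real.Gamma ((d : ℝ) / 2)))) := by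
  have hD : (1 : ℝ) ≤ (d : ℝ) := by exact_mod_cast hd
  generalize (d : ℝ) = D at *
  obtain ⟨s, hs⟩ : ∃ s, s = D - α := ⟨_, rfl⟩
  have hs1 : -2 < s := by linarith [hα.2]
  have hs2 : s < (D + 1) / 2 := by linarith [hα.1]
  have hs0 : s ≠ 0 := fun h => hαd (by linarith)
  have hkδ : 0 < k * δ := by positivity
  refine ⟨fun ε => k ^ (-s) * regI D s (k * δ) (k * ε), ?_, ?_⟩
  · intro ε hε
    have hε : 0 < ε := hε
    have h1 := ((regI_tendsto (s := s) hD hs2 hkδ (by positivity : 0 < k * ε)).comp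
      (tendsto_id.const_mul_atTop hk)).const_mul (k ^ (-s))
    refine Tendsto.congr' ?_ h1
    filter_upwards [eventually_gt_atTop 0] with R hR
    simp only [Function.comp, id]
    have hsub := intervalIntegral.integral_comp_mul_left (a := 0) (b := R) (c := k)
      (fun r => (bF D r - Set.indicator (Set.Icc (0 : ℝ) (k * δ)) (fun _ => (1 : ℝ)) r * bF D 0) *
        (r + k * ε) ^ (s - 1)) hk.ne'
    rw [mul_zero, intervalIntegral.integral_of_le hR.le,
      intervalIntegral.integral_of_le (by positivity), smul_eq_mul] at hsub
    have hsub' : (∫ r in Ioc 0 (k * R),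
        (bF D r - Set.indicator (Set.Icc (0 : ℝ) (k * δ)) (fun _ => (1 : ℝ)) r * bF D 0) *
        (r + k * ε) ^ (s - 1)) = k * ∫ r in Ioc 0 R, (bF D (k * r) -
          Set.indicator (Set.Icc (0 : ℝ) (k * δ)) (fun _ => (1 : ℝ)) (k * r) * bF D 0) *
        (k * r + k * ε) ^ (s - 1) := by
      rw [hsub, mul_inv_cancel_left₀ hk.ne']
    rw [hsub', ← mul_assoc, ← integral_const_mul]
    apply setIntegral_congr_fun measurableSet_Ioc
    intro r hr
    have hr0 : 0 < r := hr.1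
    have hind : Set.indicator (Set.Icc (0 : ℝ) (k * δ)) (fun _ => (1 : ℝ)) (k * r) =
        Set.indicator (Set.Icc (0 : ℝ) δ) (fun _ => (1 : ℝ)) r := by
      by_cases h : r ≤ δ
      · have h1 : r ∈ Set.Icc (0 : ℝ) δ := ⟨hr0.le, h⟩
        have h2 : k * r ∈ Set.Icc (0 : ℝ) (k * δ) :=
          ⟨by positivity, mul_le_mul_of_nonneg_left h hk.le⟩
        rw [indicator_of_mem h1, indicator_of_mem h2]
      · have h1 : r ∉ Set.Icc (0 : ℝ) δ := fun h' => h h'.2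
        have h2 : k * r ∉ Set.Icc (0 : ℝ) (k * δ) := fun h' => h (le_of_mul_le_mul_left h'.2 hk)
        rw [indicator_of_notMem h1, indicator_of_notMem h2]
    simp only
    rw [besselJ_eq_bF D (by positivity : 0 < k * r), hind, bF_zero, ← mul_add,
      Real.mul_rpow hk.le (by positivity), show D - 1 - α = s - 1 by rw [hs]; ring,
      Real.rpow_sub_one hk.ne', Real.rpow_neg hk.le]
    have := (Real.rpow_pos_of_pos hk s).ne'
    field_simp
  · have hz : regI D s (k * δ) 0 = 2 ^ (s - 1) * Real.Gamma (s / 2) / Real.Gamma ((D - s) / 2) -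
        bF D 0 * ((k * δ) ^ s / s) := by
      rcases lt_or_gt_of_ne hs0 with h | h
      · exact regI_zero_neg hD hs1 h hkδ
      · exact regI_zero_pos hD h hs2 hkδ
    have hlim : Tendsto (fun ε : ℝ => k * ε) (nhdsWithin 0 (Ioi 0)) (nhdsWithin 0 (Ioi 0)) := by
      apply tendsto_nhdsWithin_of_tendsto_nhds_of_eventually_within
      · have h : Continuous (fun ε : ℝ => k * ε) := by fun_prop
        simpa using (h.tendsto 0).mono_left (nhdsWithin_le_nhds (s := Ioi 0))
      · filter_upwards [self_mem_nhdsWithin] with ε hε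
        exact mul_pos hk hε
    have h2 := ((regI_eps hD hs1 hs2 hkδ).comp hlim).const_mul (k ^ (-s))
    rw [hz] at h2
    refine le_trans h2 (le_of_eq (congrArg nhds ?_))
    have hα2 : 0 < α := by linarith [hα.1]
    have hg1 := Real.Gamma_pos_of_pos (by linarith : 0 < α / 2)
    have hg2 := Real.Gamma_pos_of_pos (by linarith : 0 < D / 2)
    rw [← hs, show D - s = α by rw [hs]; ring, show α - D = -s by rw [hs]; ring, bF_zero,
      Real.div_rpow hk.le (by norm_num), Real.mul_rpow hk.le hδ.le, Real.rpow_sub_one (by norm_num),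
      Real.rpow_neg hk.le, Real.rpow_neg (by norm_num)]
    have := (Real.rpow_pos_of_pos hk s).ne'
    have := (Real.rpow_pos_of_pos (by norm_num : (0:ℝ) < 2) s).ne'
    field_simp
end

section
/- Let d ≥ 1 be an integer, δ > 0, k > 0, and α ∈ ((d−1)/2, d+2) with α ≠ d. Let λ_δ(k) = (4 Γ(d/2+1)/δ²) Σ_{n=1}^∞ (−k²δ²/4)^n/(n! Γ(n + d/2)) · (d+2−α)/(d+2n−α) be the Fourier spectrum of the nonlocal diffusion operator with kernel ρ_δ(r) = 2Γ(d/2+1)(d+2−α)/(π^{d/2} δ^{d+2−α} r^α). Then δ^{d+2−α} λ_δ(k) / (4 Γ(d/2+1)(d+2−α)) = (k/2)^{α−d} Γ((d−α)/2)/(2 Γ(α/2)) − δ^{d−α}/((d−α) Γ(d/2)) − lim_{R→∞} ∫_δ^R (2/(k r))^{(d−2)/2} J_{(d−2)/2}(k r) r^{d−1−α} dr, and the improper integral on the right converges. -/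
open MeasureTheory Filter Set

namespace FSA

/-- power series with coefficients c -/
noncomputable def ps (c : ℕ → ℝ) (z : ℝ) : ℝ := ∑' n : ℕ, c n * z ^ n

/-- factorial-type decay of coefficients -/
def FacBdd (c : ℕ → ℝ) : Prop := ∃ K : ℝ, ∀ n : ℕ, |c n| ≤ K / (Nat.factorial n : ℝ)

lemma FacBdd.summable_abs {c : ℕ → ℝ} (h : FacBdd c) (z : ℝ) :
    Summable (fun n => |c n| * |z| ^ n) := by
  obtain ⟨K, hK⟩ := h
  refine Summable.of_nonneg_of_le (fun n => by positivity) (fun n => ?_)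
    ((Real.summable_pow_div_factorial |z|).mul_left K)
  calc |c n| * |z| ^ n ≤ K / (Nat.factorial n : ℝ) * |z| ^ n := by gcongr; exact hK n
    _ = _ := by ring

lemma FacBdd.summable {c : ℕ → ℝ} (h : FacBdd c) (z : ℝ) :
    Summable (fun n => c n * z ^ n) := by
  refine Summable.of_norm ?_
  simpa [abs_mul, abs_pow] using h.summable_abs z

lemma FacBdd.shift {c : ℕ → ℝ} (h : FacBdd c) : FacBdd (fun n => ((n : ℝ) + 1) * c (n + 1)) := by
  obtain ⟨K, hK⟩ := h
  refine ⟨K, fun n => ?_⟩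
  have := hK (n + 1)
  rw [abs_mul, abs_of_pos (by positivity : (0 : ℝ) < (n : ℝ) + 1)]
  rw [Nat.factorial_succ] at this
  push_cast at this
  have hf : (0 : ℝ) < (Nat.factorial n : ℝ) := by positivity
  rw [le_div_iff₀ (by positivity)] at this ⊢
  nlinarith

lemma FacBdd.hasDerivAt {c : ℕ → ℝ} (h : FacBdd c) (z : ℝ) :
    HasDerivAt (ps c) (ps (fun n => ((n : ℝ) + 1) * c (n + 1)) z) z := by
  have key : ∀ y : ℝ, HasDerivAt (ps c) (∑' n : ℕ, c n * ((n : ℝ) * y ^ (n - 1))) y := by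
    intro y
    have hu : Summable (fun n : ℕ => |c n| * ((n : ℝ) * (|y| + 1) ^ (n - 1))) := by
      rw [← summable_nat_add_iff 1]
      refine ((h.shift).summable_abs (|y| + 1)).congr (fun n => ?_)
      have : |(|y| + 1)| = |y| + 1 := abs_of_pos (by positivity)
      rw [this, abs_mul, abs_of_pos (by positivity : (0 : ℝ) < (n : ℝ) + 1)]
      push_cast
      ring
    refine hasDerivAt_tsum_of_isPreconnected (t := Metric.ball (0 : ℝ) (|y| + 1)) (y₀ := 0) hu
      Metric.isOpen_ball (convex_ball _ _).isPreconnected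
      (g := fun n z => c n * z ^ n) (g' := fun n z => c n * ((n : ℝ) * z ^ (n - 1))) ?_ ?_ ?_ ?_ ?_
    · intro n w _
      exact (hasDerivAt_pow n w).const_mul _
    · intro n w hw
      have hw' : |w| ≤ |y| + 1 := by
        have := Metric.mem_ball.1 hw
        rw [Real.dist_eq, sub_zero] at this
        exact this.le
      rw [Real.norm_eq_abs, abs_mul, abs_mul, abs_pow, Nat.abs_cast]
      gcongr
    · simp; positivity
    · exact h.summable 0
    · simp
  have h1 := key z
  have h2 : (∑' n : ℕ, c n * ((n : ℝ) * z ^ (n - 1))) = ps (fun n => ((n : ℝ) + 1) * c (n + 1)) z := by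
    have hs : Summable (fun n : ℕ => c n * ((n : ℝ) * z ^ (n - 1))) := by
      rw [← summable_nat_add_iff 1]
      refine ((h.shift).summable z).congr (fun n => ?_)
      push_cast
      ring
    rw [hs.tsum_eq_zero_add]
    unfold ps
    simp only [Nat.cast_zero, zero_mul, mul_zero, zero_add]
    refine tsum_congr (fun n => ?_)
    push_cast
    ring
  rwa [h2] at h1

lemma FacBdd.mul_deriv {c : ℕ → ℝ} (h : FacBdd c) (z : ℝ) :
    HasSum (fun n : ℕ => (n : ℝ) * c n * z ^ n) (z * ps (fun n => ((n : ℝ) + 1) * c (n + 1)) z) := by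
  have h1 := ((h.shift).summable z).hasSum.mul_left z
  rw [← hasSum_nat_add_iff' 1]
  simp only [Finset.range_one, Finset.sum_singleton, Nat.cast_zero, zero_mul, sub_zero]
  have e : (fun n : ℕ => ((n + 1 : ℕ) : ℝ) * c (n + 1) * z ^ (n + 1)) =
      fun n : ℕ => z * (((n : ℝ) + 1) * c (n + 1) * z ^ n) := by
    funext n
    push_cast
    ring
  rw [e]
  exact h1

end FSA

namespace FSA

/-- coefficients -/
noncomputable def ac (μ : ℝ) (n : ℕ) : ℝ := 1 / ((Nat.factorial n : ℝ) * Real.Gamma ((n : ℝ) + μ))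

/-- coefficients of the primitive -/
noncomputable def bc (μ s : ℝ) (n : ℕ) : ℝ := ac μ n / (s + 2 * n)

lemma Gamma_lower {μ : ℝ} (hμ : 0 < μ) :
    ∃ m : ℝ, 0 < m ∧ ∀ n : ℕ, m ≤ Real.Gamma ((n : ℝ) + μ) := by
  refine ⟨min (Real.Gamma μ) (Real.Gamma (1 + μ)),
    lt_min (Real.Gamma_pos_of_pos hμ) (Real.Gamma_pos_of_pos (by linarith)), ?_⟩
  have h : ∀ n : ℕ, min (Real.Gamma μ) (Real.Gamma (1 + μ)) ≤ Real.Gamma (((n + 1 : ℕ) : ℝ) + μ) := by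
    intro n
    induction n with
    | zero => simp
    | succ n ih =>
      have e : ((n + 1 + 1 : ℕ) : ℝ) + μ = (((n + 1 : ℕ) : ℝ) + μ) + 1 := by push_cast; ring
      have hp : 0 < ((n + 1 : ℕ) : ℝ) + μ := by positivity
      rw [e, Real.Gamma_add_one hp.ne']
      have := Real.Gamma_pos_of_pos hp
      have h1 : (1 : ℝ) ≤ ((n + 1 : ℕ) : ℝ) + μ := by
        push_cast
        have : (0 : ℝ) ≤ n := by positivity
        linarith
      nlinarith
  intro n
  cases n with
  | zero => simp
  | succ n => exact h n

lemma ac_pos {μ : ℝ} (hμ : 0 < μ) (n : ℕ) : 0 < ac μ n := by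
  have := Real.Gamma_pos_of_pos (show 0 < (n : ℝ) + μ by positivity)
  unfold ac
  positivity

lemma ac_bdd {μ : ℝ} (hμ : 0 < μ) : FacBdd (ac μ) := by
  obtain ⟨m, hm, h⟩ := Gamma_lower hμ
  refine ⟨1 / m, fun n => ?_⟩
  rw [abs_of_pos (ac_pos hμ n)]
  unfold ac
  rw [div_div, mul_comm m]
  have := h n
  gcongr

lemma den_lower {s : ℝ} (hs : -2 < s) (hs0 : s ≠ 0) :
    ∃ m : ℝ, 0 < m ∧ ∀ n : ℕ, m ≤ |s + 2 * n| := by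
  refine ⟨min |s| (s + 2), lt_min (abs_pos.2 hs0) (by linarith), fun n => ?_⟩
  cases n with
  | zero => simp
  | succ n =>
    refine (min_le_right _ _).trans (le_trans ?_ (le_abs_self _))
    push_cast
    have : (0 : ℝ) ≤ n := by positivity
    linarith

lemma den_ne {s : ℝ} (hs : -2 < s) (hs0 : s ≠ 0) (n : ℕ) : s + 2 * (n : ℝ) ≠ 0 := by
  obtain ⟨m, hm, h⟩ := den_lower hs hs0
  exact abs_pos.1 (hm.trans_le (h n))

lemma bc_bdd {μ s : ℝ} (hμ : 0 < μ) (hs : -2 < s) (hs0 : s ≠ 0) : FacBdd (bc μ s) := by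
  obtain ⟨K, hK⟩ := ac_bdd hμ
  obtain ⟨m, hm, h⟩ := den_lower hs hs0
  refine ⟨K / m, fun n => ?_⟩
  unfold bc
  rw [abs_div]
  calc |ac μ n| / |s + 2 * n| ≤ |ac μ n| / m := by gcongr; exact h n
    _ ≤ K / (Nat.factorial n : ℝ) / m := by gcongr; exact hK n
    _ = _ := by ring

lemma ac_succ {μ : ℝ} (n : ℕ) : ((n : ℝ) + 1) * ac μ (n + 1) = ac (μ + 1) n := by
  unfold ac
  rw [Nat.factorial_succ]
  push_cast
  rw [show (n : ℝ) + 1 + μ = n + (μ + 1) by ring]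
  have : (n : ℝ) + 1 ≠ 0 := by positivity
  have : (Nat.factorial n : ℝ) ≠ 0 := by positivity
  field_simp

lemma ac_up {μ : ℝ} (hμ : 0 < μ) (n : ℕ) : ac μ n = ((n : ℝ) + μ) * ac (μ + 1) n := by
  unfold ac
  have hp : 0 < (n : ℝ) + μ := by positivity
  rw [← add_assoc, Real.Gamma_add_one hp.ne']
  have := (Real.Gamma_pos_of_pos hp).ne'
  have : (Nat.factorial n : ℝ) ≠ 0 := by positivity
  field_simp

/-- entire function -/
noncomputable def Ph (μ z : ℝ) : ℝ := ps (ac μ) z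

lemma Ph_deriv {μ : ℝ} (hμ : 0 < μ) (z : ℝ) : HasDerivAt (Ph μ) (Ph (μ + 1) z) z := by
  have := (ac_bdd hμ).hasDerivAt z
  simp only [ac_succ] at this
  exact this

lemma Ph_cont {μ : ℝ} (hμ : 0 < μ) : Continuous (Ph μ) :=
  continuous_iff_continuousAt.2 fun z => (Ph_deriv hμ z).continuousAt

lemma Ph_rec {μ : ℝ} (hμ : 0 < μ) (z : ℝ) : Ph μ z = μ * Ph (μ + 1) z + z * Ph (μ + 2) z := by
  have h1 := (ac_bdd (show 0 < μ + 1 by linarith)).mul_deriv z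
  simp only [ac_succ] at h1
  have h2 := ((ac_bdd (show 0 < μ + 1 by linarith)).summable z).hasSum.mul_left μ
  have h3 := h2.add h1
  have e : (fun n : ℕ => μ * (ac (μ + 1) n * z ^ n) + (n : ℝ) * ac (μ + 1) n * z ^ n) =
      fun n : ℕ => ac μ n * z ^ n := by
    funext n
    rw [ac_up hμ n]
    ring
  rw [e] at h3
  have := h3.tsum_eq
  rw [show μ + 2 = μ + 1 + 1 by ring]
  exact this

/-- primitive -/
noncomputable def Fp (μ s x : ℝ) : ℝ := x ^ s * ps (bc μ s) (-x ^ 2 / 4)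

lemma Fp_deriv {μ s : ℝ} (hμ : 0 < μ) (hs : -2 < s) (hs0 : s ≠ 0) {x : ℝ} (hx : 0 < x) :
    HasDerivAt (Fp μ s) (x ^ (s - 1) * Ph μ (-x ^ 2 / 4)) x := by
  have hb := bc_bdd hμ hs hs0
  have h1 := hb.hasDerivAt (-x ^ 2 / 4)
  have hz : HasDerivAt (fun x : ℝ => -x ^ 2 / 4) (-x / 2) x := by
    have := ((hasDerivAt_pow 2 x).neg).div_const 4
    refine this.congr_deriv ?_
    norm_num
    ring
  have h2 := (Real.hasDerivAt_rpow_const (p := s) (Or.inl hx.ne')).mul (h1.comp x hz)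
  have h3 := ((hb.summable (-x ^ 2 / 4)).hasSum.mul_left s).add
    ((hb.mul_deriv (-x ^ 2 / 4)).mul_left 2)
  have e : (fun n : ℕ => s * (bc μ s n * (-x ^ 2 / 4) ^ n) +
      2 * ((n : ℝ) * bc μ s n * (-x ^ 2 / 4) ^ n)) = fun n : ℕ => ac μ n * (-x ^ 2 / 4) ^ n := by
    funext n
    unfold bc
    have := den_ne hs hs0 n
    field_simp
  rw [e] at h3
  have h4 : Ph μ (-x ^ 2 / 4) = _ := h3.tsum_eq
  have hxs : x ^ s = x ^ (s - 1) * x := by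
    rw [Real.rpow_sub_one hx.ne']; field_simp
  refine h2.congr_deriv ?_
  rw [h4, hxs]
  change _ = x ^ (s - 1) * (s * ps (bc μ s) (-x ^ 2 / 4) + _)
  simp only [Function.comp]
  ring

lemma Fp_up {μ s : ℝ} (hμ : 0 < μ) (hs : -2 < s) (hs0 : s ≠ 0) (x : ℝ) :
    Fp μ s x = x ^ s * Ph (μ + 1) (-x ^ 2 / 4) / 2 + (μ - s / 2) * Fp (μ + 1) s x := by
  have hμ' : 0 < μ + 1 := by linarith
  have h1 := (((ac_bdd hμ').summable (-x ^ 2 / 4)).hasSum.mul_left (1 / 2)).add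
    (((bc_bdd hμ' hs hs0).summable (-x ^ 2 / 4)).hasSum.mul_left (μ - s / 2))
  have e : (fun n : ℕ => 1 / 2 * (ac (μ + 1) n * (-x ^ 2 / 4) ^ n) +
      (μ - s / 2) * (bc (μ + 1) s n * (-x ^ 2 / 4) ^ n)) =
      fun n : ℕ => bc μ s n * (-x ^ 2 / 4) ^ n := by
    funext n
    unfold bc
    have := den_ne hs hs0 n
    rw [ac_up hμ n]
    field_simp
    ring
  rw [e] at h1
  have h4 : ps (bc μ s) (-x ^ 2 / 4) = 1 / 2 * Ph (μ + 1) (-x ^ 2 / 4) +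
    (μ - s / 2) * ps (bc (μ + 1) s) (-x ^ 2 / 4) := h1.tsum_eq
  unfold Fp
  rw [h4]
  ring

lemma Fp_down {μ s : ℝ} (hμ : 0 < μ) (hs : -2 < s) (hs0 : s ≠ 0) {x : ℝ} (hx : 0 < x) :
    Fp μ s x = x ^ s * Ph μ (-x ^ 2 / 4) / s + 1 / (2 * s) * Fp (μ + 1) (s + 2) x := by
  have hμ' : 0 < μ + 1 := by linarith
  set z := -x ^ 2 / 4 with hz
  have hb := bc_bdd hμ' (show -2 < s + 2 by linarith) (show s + 2 ≠ 0 by linarith)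
  have h0 := ((bc_bdd hμ hs hs0).summable z).hasSum
  have h1 := h0.sub (((ac_bdd hμ).summable z).hasSum.mul_left (1 / s))
  have h2 := (hb.summable z).hasSum.mul_left (- 2 * z / s)
  have h3 : ps (bc μ s) z - 1 / s * Ph μ z = - 2 * z / s * ps (bc (μ + 1) (s + 2)) z := by
    refine HasSum.unique h1 ?_
    rw [← hasSum_nat_add_iff' 1]
    simp only [Finset.range_one, Finset.sum_singleton]
    have e0 : bc μ s 0 * z ^ 0 - 1 / s * (ac μ 0 * z ^ 0) = 0 := by
      unfold bc
      simp
      ring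
    rw [e0, sub_zero]
    have e : (fun n : ℕ => bc μ s (n + 1) * z ^ (n + 1) - 1 / s * (ac μ (n + 1) * z ^ (n + 1))) =
      fun n : ℕ => - 2 * z / s * (bc (μ + 1) (s + 2) n * z ^ n) := by
      funext n
      unfold bc
      have := den_ne hs hs0 (n + 1)
      have h5 : s + 2 + 2 * (n : ℝ) ≠ 0 := by
        have : (0 : ℝ) ≤ n := by positivity
        intro h
        linarith
      rw [← ac_succ (μ := μ) n]
      push_cast at this ⊢
      field_simp
      ring
    rw [e]
    exact h2
  have h4 : ps (bc μ s) z = 1 / s * Ph μ z + - 2 * z / s * ps (bc (μ + 1) (s + 2)) z := by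
    linarith
  unfold Fp
  rw [← hz, h4, Real.rpow_add hx, Real.rpow_two, hz]
  field_simp
  ring

end FSA

namespace FSA

lemma zderiv (x : ℝ) : HasDerivAt (fun x : ℝ => -x ^ 2 / 4) (-x / 2) x := by
  have := ((hasDerivAt_pow 2 x).neg).div_const 4
  refine this.congr_deriv ?_
  norm_num
  ring

lemma Phx_deriv {μ : ℝ} (hμ : 0 < μ) (x : ℝ) :
    HasDerivAt (fun x : ℝ => Ph μ (-x ^ 2 / 4)) (-x / 2 * Ph (μ + 1) (-x ^ 2 / 4)) x := by
  have := (Ph_deriv hμ (-x ^ 2 / 4)).comp x (zderiv x)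
  refine this.congr_deriv ?_
  ring

/-- Decay bound by an energy estimate. -/
lemma Ph_decay {μ : ℝ} (hμ : 0 < μ) :
    ∃ C : ℝ, 0 < C ∧ ∀ x : ℝ, 1 ≤ x → |Ph μ (-x ^ 2 / 4)| ≤ C * x ^ (1 / 2 - μ) := by
  set p : ℝ := μ - 1 / 2 with hp
  set c : ℝ := p * (p - 1) with hc
  let u : ℝ → ℝ := fun x => x ^ p * Ph μ (-x ^ 2 / 4)
  let v : ℝ → ℝ := fun x => p * (x ^ (p - 1) * Ph μ (-x ^ 2 / 4)) -
    1 / 2 * (x ^ (p + 1) * Ph (μ + 1) (-x ^ 2 / 4))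
  have hu : ∀ x : ℝ, 0 < x → HasDerivAt u (v x) x := by
    intro x hx
    have h := (Real.hasDerivAt_rpow_const (p := p) (Or.inl hx.ne')).mul (Phx_deriv hμ x)
    refine h.congr_deriv ?_
    simp only [v]
    rw [Real.rpow_add_one hx.ne']
    ring
  have hv : ∀ x : ℝ, 0 < x → HasDerivAt v (c / x ^ 2 * u x - u x) x := by
    intro x hx
    have h1 := ((Real.hasDerivAt_rpow_const (p := p - 1) (Or.inl hx.ne')).mul
      (Phx_deriv hμ x)).const_mul p
    have h2 := ((Real.hasDerivAt_rpow_const (p := p + 1) (Or.inl hx.ne')).mul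
      (Phx_deriv (show 0 < μ + 1 by linarith) x)).const_mul (1 / 2)
    refine (h1.sub h2).congr_deriv ?_
    simp only [u]
    have hrec := Ph_rec hμ (-x ^ 2 / 4)
    rw [show μ + 1 + 1 = μ + 2 by ring, show p + 1 - 1 = p by ring, Real.rpow_add_one hx.ne',
      Real.rpow_sub_one hx.ne' (p - 1), Real.rpow_sub_one hx.ne' p]
    have e : x ^ 2 * Ph (μ + 2) (-x ^ 2 / 4) =
      4 * μ * Ph (μ + 1) (-x ^ 2 / 4) - 4 * Ph μ (-x ^ 2 / 4) := by linarith
    have e' : μ = p + 1 / 2 := by rw [hp]; ring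
    generalize Ph (μ + 2) (-x ^ 2 / 4) = A2 at *
    generalize Ph (μ + 1) (-x ^ 2 / 4) = A1 at *
    generalize Ph μ (-x ^ 2 / 4) = A0 at *
    have e2 : A2 = (4 * μ * A1 - 4 * A0) / x ^ 2 := by
      rw [← e]; field_simp
    rw [e2, e', hc]
    field_simp
    ring
  let E : ℝ → ℝ := fun x => (u x ^ 2 + v x ^ 2) * Real.exp (|c| / x)
  have hE : ∀ x : ℝ, 0 < x → HasDerivAt E
      ((2 * (c * u x * v x) - |c| * (u x ^ 2 + v x ^ 2)) / x ^ 2 * Real.exp (|c| / x)) x := by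
    intro x hx
    have h1 := ((hu x hx).pow 2).add ((hv x hx).pow 2)
    have h2 : HasDerivAt (fun x : ℝ => |c| / x) (-|c| / x ^ 2) x := by
      have := (hasDerivAt_inv hx.ne').const_mul |c|
      refine this.congr_deriv ?_
      field_simp
    refine (h1.mul h2.exp).congr_deriv ?_
    simp only [Pi.add_apply, Pi.pow_apply]
    push_cast
    field_simp
    ring
  have hanti : AntitoneOn E (Set.Ici 1) := by
    have hpos : ∀ x ∈ Set.Ici (1 : ℝ), 0 < x := fun x hx => lt_of_lt_of_le one_pos hx
    refine antitoneOn_of_deriv_nonpos (convex_Ici 1)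
      (fun x hx => (hE x (hpos x hx)).continuousAt.continuousWithinAt) ?_ ?_
    · intro x hx
      exact (hE x (hpos x (interior_subset hx))).differentiableAt.differentiableWithinAt
    · intro x hx
      have hx0 := hpos x (interior_subset hx)
      rw [(hE x hx0).deriv]
      refine mul_nonpos_of_nonpos_of_nonneg (div_nonpos_of_nonpos_of_nonneg ?_ (by positivity))
        (Real.exp_pos _).le
      have h1 : c * u x * v x ≤ |c| * (|u x| * |v x|) := by
        rw [← abs_mul, ← abs_mul, mul_assoc]
        exact le_abs_self _
      have h2 : 2 * (|u x| * |v x|) ≤ u x ^ 2 + v x ^ 2 := by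
        rw [← sq_abs (u x), ← sq_abs (v x)]
        nlinarith [sq_nonneg (|u x| - |v x|)]
      nlinarith [abs_nonneg c]
  have hE0 : ∀ x, 0 ≤ E x := fun x => by simp only [E]; positivity
  refine ⟨E 1 + 1, by linarith [hE0 1], fun x hx => ?_⟩
  have hx0 : 0 < x := by linarith
  have h1 : E x ≤ E 1 := hanti (Set.mem_Ici.2 le_rfl) hx hx
  have h2 : u x ^ 2 ≤ E x := by
    have : 1 ≤ Real.exp (|c| / x) := Real.one_le_exp (by positivity)
    simp only [E]
    nlinarith [sq_nonneg (u x), sq_nonneg (v x)]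
  have h3 : |u x| ≤ E 1 + 1 := by
    rw [abs_le]
    have := hE0 1
    constructor <;> nlinarith
  have h4 : Ph μ (-x ^ 2 / 4) = u x * x ^ (1 / 2 - μ) := by
    simp only [u]
    rw [mul_right_comm, ← Real.rpow_add hx0, hp]
    ring_nf
    simp
  rw [h4, abs_mul, abs_of_pos (Real.rpow_pos_of_pos hx0 _)]
  gcongr

lemma boundary_tendsto {μ s : ℝ} (hμ : 0 < μ) (hs : s < μ - 1 / 2) :
    Tendsto (fun x : ℝ => x ^ s * Ph μ (-x ^ 2 / 4)) atTop (nhds 0) := by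
  obtain ⟨C, hC, h⟩ := Ph_decay hμ
  have h0 : Tendsto (fun x : ℝ => C * x ^ (-(μ - 1 / 2 - s))) atTop (nhds 0) := by
    simpa using (tendsto_rpow_neg_atTop (show 0 < μ - 1 / 2 - s by linarith)).const_mul C
  refine squeeze_zero_norm' ?_ h0
  filter_upwards [eventually_ge_atTop 1] with x hx
  have hx0 : 0 < x := by linarith
  rw [Real.norm_eq_abs, abs_mul, abs_of_pos (Real.rpow_pos_of_pos hx0 _)]
  calc x ^ s * |Ph μ (-x ^ 2 / 4)| ≤ x ^ s * (C * x ^ (1 / 2 - μ)) := by gcongr; exact h x hx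
    _ = C * (x ^ s * x ^ (1 / 2 - μ)) := by ring
    _ = _ := by rw [← Real.rpow_add hx0]; ring_nf

lemma Ph_integrable {μ s : ℝ} (hμ : 0 < μ) (hs0 : 0 < s) (hs : s < μ - 1 / 2) :
    IntegrableOn (fun x : ℝ => x ^ (s - 1) * Ph μ (-x ^ 2 / 4)) (Ioi 0) := by
  obtain ⟨C, hC, h⟩ := Ph_decay hμ
  have hcont : Continuous (fun x : ℝ => Ph μ (-x ^ 2 / 4)) := (Ph_cont hμ).comp (by fun_prop)
  rw [← Ioc_union_Ioi_eq_Ioi (zero_le_one' ℝ)]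
  refine IntegrableOn.union ?_ ?_
  · rw [← intervalIntegrable_iff_integrableOn_Ioc_of_le zero_le_one]
    exact (intervalIntegral.intervalIntegrable_rpow' (by linarith)).mul_continuousOn
      hcont.continuousOn
  · have hg : IntegrableOn (fun x : ℝ => C * x ^ (s - 1 + (1 / 2 - μ))) (Ioi 1) :=
      (integrableOn_Ioi_rpow_of_lt (by linarith) one_pos).const_mul C
    refine Integrable.mono' hg ?_ ?_
    · refine ContinuousOn.aestronglyMeasurable ?_ measurableSet_Ioi
      refine ContinuousOn.mul ?_ hcont.continuousOn
      intro x hx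
      exact (Real.continuousAt_rpow_const _ _
        (Or.inl (lt_trans one_pos hx).ne')).continuousWithinAt
    · refine (ae_restrict_iff' measurableSet_Ioi).2 (Eventually.of_forall fun x hx => ?_)
      have hx1 : 1 < x := hx
      have hx0 : 0 < x := by linarith
      rw [Real.norm_eq_abs, abs_mul, abs_of_pos (Real.rpow_pos_of_pos hx0 _)]
      calc x ^ (s - 1) * |Ph μ (-x ^ 2 / 4)| ≤ x ^ (s - 1) * (C * x ^ (1 / 2 - μ)) := by
            gcongr; exact h x hx1.le
        _ = C * (x ^ (s - 1) * x ^ (1 / 2 - μ)) := by ring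
        _ = _ := by rw [← Real.rpow_add hx0]

lemma Fp_tendsto_integral {μ s : ℝ} (hμ : 0 < μ) (hs0 : 0 < s) (hs : s < μ - 1 / 2) :
    Tendsto (Fp μ s) atTop (nhds (∫ x in Ioi (0 : ℝ), x ^ (s - 1) * Ph μ (-x ^ 2 / 4))) := by
  have hi := Ph_integrable hμ hs0 hs
  have h := intervalIntegral_tendsto_integral_Ioi 0 hi tendsto_id
  refine h.congr' ?_
  filter_upwards [eventually_ge_atTop 0] with R hR
  have hs2 : -2 < s := by linarith
  have hbc : Continuous (ps (bc μ s)) :=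
    continuous_iff_continuousAt.2 fun z => ((bc_bdd hμ hs2 hs0.ne').hasDerivAt z).continuousAt
  have hFc : Continuous (Fp μ s) := by
    unfold Fp
    exact (Real.continuous_rpow_const hs0.le).mul (hbc.comp (by fun_prop))
  have := intervalIntegral.integral_eq_sub_of_hasDerivAt_of_le (f := Fp μ s) hR hFc.continuousOn
    (fun x hx => Fp_deriv hμ hs2 hs0.ne' hx.1)
    ((intervalIntegrable_iff_integrableOn_Ioc_of_le hR).2 (hi.mono_set Ioc_subset_Ioi_self))
  simp only [id]
  rw [this]
  unfold Fp
  simp [Real.zero_rpow hs0.ne']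

end FSA

namespace FSA

lemma gauss_term {μ t : ℝ} (hμ : 0 < μ) (ht : 0 < t) (n : ℕ) :
    ac μ n * ∫ r in Ioi (0 : ℝ), r ^ (2 * μ - 1 + 2 * n) * Real.exp (-t * r ^ (2 : ℝ)) =
      1 / 2 * t ^ (-μ) * ((1 / t) ^ n / (Nat.factorial n : ℝ)) := by
  have hn : (0 : ℝ) ≤ n := by positivity
  rw [integral_rpow_mul_exp_neg_mul_rpow two_pos (by linarith) ht]
  rw [show (2 * μ - 1 + 2 * (n : ℝ) + 1) / 2 = n + μ by ring,
    show -(2 * μ - 1 + 2 * (n : ℝ) + 1) / 2 = -μ + -(n : ℝ) by ring, Real.rpow_add ht,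
    Real.rpow_neg ht.le (n : ℝ), Real.rpow_natCast]
  unfold ac
  have := (Real.Gamma_pos_of_pos (show 0 < (n : ℝ) + μ by positivity)).ne'
  have : (Nat.factorial n : ℝ) ≠ 0 := by positivity
  rw [one_div_pow]
  field_simp

lemma gauss_integral {μ t : ℝ} (hμ : 0 < μ) (ht : 0 < t) :
    ∫ r in Ioi (0 : ℝ), r ^ (2 * μ - 1) * Ph μ (-r ^ 2 / 4) * Real.exp (-(r ^ 2 * t)) =
      1 / 2 * t ^ (-μ) * Real.exp (-(1 / 4 * t⁻¹)) := by
  let F : ℕ → ℝ → ℝ := fun n r =>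
    (ac μ n * (-1 / 4) ^ n) * (r ^ (2 * μ - 1 + 2 * n) * Real.exp (-t * r ^ (2 : ℝ)))
  have hintg : ∀ n, Integrable (F n) (volume.restrict (Ioi 0)) := fun n => by
    have hn : (0 : ℝ) ≤ n := by positivity
    exact (integrableOn_rpow_mul_exp_neg_mul_rpow (by linarith) two_pos ht).const_mul _
  have hnorm : ∀ n, ∫ r in Ioi (0 : ℝ), ‖F n r‖ =
      1 / 2 * t ^ (-μ) * ((1 / 4 * (1 / t)) ^ n / (Nat.factorial n : ℝ)) := by
    intro n
    have : ∫ r in Ioi (0 : ℝ), ‖F n r‖ = ∫ r in Ioi (0 : ℝ), (1 / 4) ^ n *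
        (ac μ n * (r ^ (2 * μ - 1 + 2 * n) * Real.exp (-t * r ^ (2 : ℝ)))) := by
      refine setIntegral_congr_fun measurableSet_Ioi (fun r hr => ?_)
      have hr0 : (0 : ℝ) < r := hr
      simp only [F]
      rw [Real.norm_eq_abs, abs_mul, abs_mul, abs_mul, abs_pow, abs_of_pos (ac_pos hμ n),
        abs_of_pos (Real.rpow_pos_of_pos hr0 _), abs_of_pos (Real.exp_pos _)]
      norm_num
      ring
    rw [this, integral_const_mul, integral_const_mul, gauss_term hμ ht n, mul_pow]
    ring
  have h := hasSum_integral_of_summable_integral_norm hintg (by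
    simp only [hnorm]
    exact (Real.summable_pow_div_factorial _).mul_left _)
  have e1 : ∀ n, ∫ r in Ioi (0 : ℝ), F n r =
      1 / 2 * t ^ (-μ) * ((-(1 / 4 * t⁻¹)) ^ n / (Nat.factorial n : ℝ)) := by
    intro n
    simp only [F]
    rw [integral_const_mul, mul_right_comm, gauss_term hμ ht n,
      show -(1 / 4 * t⁻¹) = (1 / t) * (-1 / 4) by ring, mul_pow]
    ring
  simp only [e1] at h
  have h2 : HasSum (fun n : ℕ => 1 / 2 * t ^ (-μ) *
      ((-(1 / 4 * t⁻¹)) ^ n / (Nat.factorial n : ℝ)))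
      (1 / 2 * t ^ (-μ) * Real.exp (-(1 / 4 * t⁻¹))) := by
    rw [Real.exp_eq_exp_ℝ]
    exact (NormedSpace.expSeries_div_hasSum_exp (-(1 / 4 * t⁻¹))).mul_left _
  rw [← h.unique h2]
  refine setIntegral_congr_fun measurableSet_Ioi (fun r hr => ?_)
  have hr0 : (0 : ℝ) < r := hr
  simp only [F]
  have e3 : ∀ n : ℕ, ac μ n * (-1 / 4) ^ n *
      (r ^ (2 * μ - 1 + 2 * n) * Real.exp (-t * r ^ (2 : ℝ))) =
      r ^ (2 * μ - 1) * Real.exp (-(r ^ 2 * t)) * (ac μ n * (-r ^ 2 / 4) ^ n) := by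
    intro n
    rw [Real.rpow_add hr0, show (2 : ℝ) * n = ((2 * n : ℕ) : ℝ) by push_cast; ring,
      Real.rpow_natCast, Real.rpow_two, show -t * r ^ 2 = -(r ^ 2 * t) by ring,
      show -r ^ 2 / 4 = r ^ 2 * (-1 / 4) by ring, mul_pow, ← pow_mul]
    ring
  simp only [e3]
  rw [tsum_mul_left]
  change _ = _ * Ph μ _
  ring

lemma inv_exp_integral {a : ℝ} (ha : 0 < a) :
    ∫ t in Ioi (0 : ℝ), t ^ (-a - 1) * Real.exp (-(1 / 4 * t⁻¹)) = 4 ^ a * Real.Gamma a := by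
  have h := integral_comp_rpow_Ioi (fun y : ℝ => y ^ (a - 1) * Real.exp (-(1 / 4 * y)))
    (show (-1 : ℝ) ≠ 0 by norm_num)
  rw [Real.integral_rpow_mul_exp_neg_mul_Ioi ha (by norm_num)] at h
  rw [show (1 : ℝ) / (1 / 4) = 4 by norm_num] at h
  rw [← h]
  refine setIntegral_congr_fun measurableSet_Ioi (fun t ht => ?_)
  have ht0 : (0 : ℝ) < t := ht
  simp only [smul_eq_mul, abs_neg, abs_one, one_mul]
  rw [← Real.rpow_mul ht0.le, ← mul_assoc, ← Real.rpow_add ht0, Real.rpow_neg_one]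
  ring_nf

lemma Ph_mellin {μ s : ℝ} (hμ : 0 < μ) (hs0 : 0 < s) (hs : s < μ - 1 / 2) :
    ∫ x in Ioi (0 : ℝ), x ^ (s - 1) * Ph μ (-x ^ 2 / 4) =
      2 ^ (s - 1) * Real.Gamma (s / 2) / Real.Gamma (μ - s / 2) := by
  set q : ℝ := μ - s / 2 with hq
  have hq0 : 0 < q := by rw [hq]; linarith
  have hG := Real.Gamma_pos_of_pos hq0
  let f : ℝ → ℝ → ℝ := fun r t =>
    r ^ (2 * μ - 1) * Ph μ (-r ^ 2 / 4) * (t ^ (q - 1) * Real.exp (-(r ^ 2 * t)))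
  have hPm : Measurable (Ph μ) := (Ph_cont hμ).measurable
  have hfm : Measurable (Function.uncurry f) := by
    simp only [f, Function.uncurry_def]
    fun_prop
  have hpow : ∀ r : ℝ, 0 < r → r ^ (2 * μ - 1) * (1 / r ^ 2) ^ q = r ^ (s - 1) := by
    intro r hr
    rw [← Real.rpow_two, one_div, ← Real.rpow_neg hr.le, ← Real.rpow_mul hr.le,
      ← Real.rpow_add hr, hq]
    ring_nf
  have hin : ∀ r : ℝ, 0 < r → ∫ t in Ioi (0 : ℝ), f r t =
      Real.Gamma q * (r ^ (s - 1) * Ph μ (-r ^ 2 / 4)) := by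
    intro r hr
    simp only [f]
    rw [integral_const_mul, Real.integral_rpow_mul_exp_neg_mul_Ioi hq0 (by positivity), ← hpow r hr]
    ring
  have hI := Ph_integrable hμ hs0 hs
  have hF : Integrable (Function.uncurry f)
      ((volume.restrict (Ioi (0 : ℝ))).prod (volume.restrict (Ioi (0 : ℝ)))) := by
    rw [integrable_prod_iff hfm.aestronglyMeasurable]
    constructor
    · refine (ae_restrict_iff' measurableSet_Ioi).2 (Eventually.of_forall fun r hr => ?_)
      have hr0 : (0 : ℝ) < r := hr
      simp only [Function.uncurry, f]
      have := (integrableOn_rpow_mul_exp_neg_mul_rpow (p := 1) (s := q - 1) (b := r ^ 2)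
        (by linarith) one_pos (by positivity))
      simp only [Real.rpow_one, neg_mul] at this
      exact this.const_mul _
    · refine Integrable.congr (hI.norm.const_mul (Real.Gamma q)) ?_
      refine (ae_restrict_iff' measurableSet_Ioi).2 (Eventually.of_forall fun r hr => ?_)
      have hr0 : (0 : ℝ) < r := hr
      simp only [Function.uncurry, f]
      have : ∫ t in Ioi (0 : ℝ), ‖r ^ (2 * μ - 1) * Ph μ (-r ^ 2 / 4) *
          (t ^ (q - 1) * Real.exp (-(r ^ 2 * t)))‖ =
          ∫ t in Ioi (0 : ℝ), |r ^ (2 * μ - 1) * Ph μ (-r ^ 2 / 4)| *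
          (t ^ (q - 1) * Real.exp (-(r ^ 2 * t))) := by
        refine setIntegral_congr_fun measurableSet_Ioi (fun t ht => ?_)
        have ht0 : (0 : ℝ) < t := ht
        rw [Real.norm_eq_abs, abs_mul, abs_of_pos (a := t ^ (q - 1) * _) (by positivity)]
      rw [this, integral_const_mul, Real.integral_rpow_mul_exp_neg_mul_Ioi hq0 (by positivity),
        abs_mul, Real.norm_eq_abs, abs_mul, abs_of_pos (Real.rpow_pos_of_pos hr0 _),
        abs_of_pos (Real.rpow_pos_of_pos hr0 _), ← hpow r hr0]
      ring
  have hswap := integral_integral_swap hF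
  have hL : ∫ r in Ioi (0 : ℝ), ∫ t in Ioi (0 : ℝ), f r t =
      Real.Gamma q * ∫ x in Ioi (0 : ℝ), x ^ (s - 1) * Ph μ (-x ^ 2 / 4) := by
    rw [← integral_const_mul]
    exact setIntegral_congr_fun measurableSet_Ioi (fun r hr => hin r hr)
  have hR : ∫ t in Ioi (0 : ℝ), ∫ r in Ioi (0 : ℝ), f r t =
      1 / 2 * (4 ^ (s / 2) * Real.Gamma (s / 2)) := by
    rw [← inv_exp_integral (show 0 < s / 2 by linarith), ← integral_const_mul]
    refine setIntegral_congr_fun measurableSet_Ioi (fun t ht => ?_)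
    have ht0 : (0 : ℝ) < t := ht
    have e : ∀ r : ℝ, f r t = t ^ (q - 1) *
        (r ^ (2 * μ - 1) * Ph μ (-r ^ 2 / 4) * Real.exp (-(r ^ 2 * t))) := by
      intro r
      simp only [f]
      ring
    simp only [e]
    rw [integral_const_mul, gauss_integral hμ ht0,
      show -(s / 2) - 1 = (q - 1) + (-μ) by rw [hq]; ring, Real.rpow_add ht0]
    ring
  rw [hL, hR] at hswap
  rw [eq_div_iff hG.ne', mul_comm, hswap, Real.rpow_sub_one two_ne_zero,
    show (4 : ℝ) = 2 ^ (2 : ℝ) by norm_num, ← Real.rpow_mul two_pos.le]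
  rw [show 2 * (s / 2) = s by ring]
  ring

/-- limit of the primitive -/
lemma Fp_tendsto_pos {μ s : ℝ} (hμ : 1 / 2 ≤ μ) (hs0 : 0 < s) (hs : s < μ + 1 / 2) :
    Tendsto (Fp μ s) atTop
      (nhds (2 ^ (s - 1) * Real.Gamma (s / 2) / Real.Gamma (μ - s / 2))) := by
  have hμ0 : 0 < μ := by linarith
  have hμ1 : 0 < μ + 1 := by linarith
  have hs' : s < μ + 1 - 1 / 2 := by linarith
  have hq : 0 < μ - s / 2 := by linarith
  have h1 := Fp_tendsto_integral hμ1 hs0 hs'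
  rw [Ph_mellin hμ1 hs0 hs'] at h1
  have h2 := ((boundary_tendsto hμ1 hs').div_const 2).add (h1.const_mul (μ - s / 2))
  have e : Fp μ s = fun x => x ^ s * Ph (μ + 1) (-x ^ 2 / 4) / 2 + (μ - s / 2) * Fp (μ + 1) s x :=
    funext fun x => Fp_up hμ0 (by linarith) hs0.ne' x
  rw [e]
  convert h2 using 2
  rw [show μ + 1 - s / 2 = (μ - s / 2) + 1 by ring, Real.Gamma_add_one hq.ne']
  have := (Real.Gamma_pos_of_pos hq).ne'
  generalize μ - s / 2 = q at *
  have hq' := hq.ne'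
  field_simp
  ring

lemma Fp_tendsto {μ s : ℝ} (hμ : 1 / 2 ≤ μ) (hs2 : -2 < s) (hs0 : s ≠ 0) (hs : s < μ + 1 / 2) :
    Tendsto (Fp μ s) atTop
      (nhds (2 ^ (s - 1) * Real.Gamma (s / 2) / Real.Gamma (μ - s / 2))) := by
  rcases lt_or_gt_of_ne hs0 with h | h
  · have hμ0 : 0 < μ := by linarith
    have h1 := Fp_tendsto_pos (μ := μ + 1) (s := s + 2) (by linarith) (by linarith) (by linarith)
    have h2 := ((boundary_tendsto hμ0 (show s < μ - 1 / 2 by linarith)).div_const s).add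
      (h1.const_mul (1 / (2 * s)))
    have h3 : Tendsto (Fp μ s) atTop _ := h2.congr' (by
      filter_upwards [eventually_gt_atTop 0] with x hx
      exact (Fp_down hμ0 hs2 hs0 hx).symm)
    convert h3 using 2
    rw [show (s + 2) / 2 = s / 2 + 1 by ring, Real.Gamma_add_one (by positivity),
      show μ + 1 - (s / 2 + 1) = μ - s / 2 by ring, show s + 2 - 1 = (s - 1) + 2 by ring,
      Real.rpow_add two_pos, Real.rpow_two]
    field_simp
    ring
  · exact Fp_tendsto_pos hμ h hs

lemma bessel_eq {μ x : ℝ} (hx : 0 < x) :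
    (2 / x) ^ (μ - 1) * besselJ (μ - 1) x = Ph μ (-x ^ 2 / 4) := by
  unfold besselJ Ph ps
  rw [← tsum_mul_left]
  refine tsum_congr fun m => ?_
  have hx2 : 0 < x / 2 := by positivity
  rw [show 2 / x = (x / 2)⁻¹ by rw [inv_div], Real.inv_rpow hx2.le, Real.rpow_add hx2,
    show 2 * (m : ℝ) = ((2 * m : ℕ) : ℝ) by push_cast; ring, Real.rpow_natCast,
    show μ - 1 + (m : ℝ) + 1 = m + μ by ring, show -x ^ 2 / 4 = (-1) * (x / 2) ^ 2 by ring,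
    mul_pow, ← pow_mul]
  have := (Real.rpow_pos_of_pos hx2 (μ - 1)).ne'
  unfold ac
  field_simp

end FSA

/-- With `λ_δ(k)` the (Maclaurin-series) Fourier spectrum of the nonlocal
diffusion operator with kernel `ρ_δ(r) = 2Γ(d/2+1)(d+2−α)/(π^{d/2} δ^{d+2−α} r^α)`, for
`α ∈ ((d−1)/2, d+2)`, `α ≠ d`, one has
`δ^{d+2−α} λ_δ(k) / (4Γ(d/2+1)(d+2−α)) = (k/2)^{α−d} Γ((d−α)/2)/(2Γ(α/2))
 − δ^{d−α}/((d−α)Γ(d/2)) − lim_{R→∞} ∫_δ^R (2/(kr))^{(d−2)/2} J_{(d−2)/2}(kr) r^{d−1−α} dr`,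
and the improper integral on the right converges. -/
theorem fourier_spectrum_asymptotic_split
    (d : ℕ) (hd : 1 ≤ d) (δ k α : ℝ) (hδ : 0 < δ) (hk : 0 < k)
    (hα : α ∈ Set.Ioo (((d : ℝ) - 1) / 2) ((d : ℝ) + 2)) (hαd : α ≠ (d : ℝ)) :
    ∃ L : ℝ,
      Filter.Tendsto
        (fun R : ℝ =>
          ∫ r in Set.Ioc δ R,
            (2 / (k * r)) ^ (((d : ℝ) - 2) / 2) * besselJ (((d : ℝ) - 2) / 2) (k * r) *
              r ^ ((d : ℝ) - 1 - α))
        Filter.atTop (nhds L) ∧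
      δ ^ ((d : ℝ) + 2 - α) *
          (4 * Real.Gamma ((d : ℝ) / 2 + 1) / δ ^ 2 *
            ∑' n : ℕ,
              (-(k ^ 2 * δ ^ 2) / 4) ^ (n + 1) /
                  ((Nat.factorial (n + 1) : ℝ) * Real.Gamma (((n : ℝ) + 1) + (d : ℝ) / 2)) *
                (((d : ℝ) + 2 - α) / ((d : ℝ) + 2 * ((n : ℝ) + 1) - α))) /
          (4 * Real.Gamma ((d : ℝ) / 2 + 1) * ((d : ℝ) + 2 - α))
        = (k / 2) ^ (α - (d : ℝ)) * Real.Gamma (((d : ℝ) - α) / 2) /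
            (2 * Real.Gamma (α / 2)) -
          δ ^ ((d : ℝ) - α) / (((d : ℝ) - α) * Real.Gamma ((d : ℝ) / 2)) - L := by
  obtain ⟨hα1, hα2⟩ := hα
  set μ : ℝ := (d : ℝ) / 2 with hμd
  have hd1 : (1 : ℝ) ≤ d := by exact_mod_cast hd
  have hdμ : (d : ℝ) = 2 * μ := by rw [hμd]; ring
  set s : ℝ := (d : ℝ) - α with hs
  have hμ : 1 / 2 ≤ μ := by linarith
  have hμ0 : 0 < μ := by linarith
  have hs2 : -2 < s := by linarith
  have hs0 : s ≠ 0 := sub_ne_zero.2 hαd.symm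
  have hsu : s < μ + 1 / 2 := by linarith
  set G : ℝ → ℝ := fun r => k ^ (-s) * FSA.Fp μ s (k * r) with hG
  have hGd : ∀ r : ℝ, 0 < r → HasDerivAt G (r ^ (s - 1) * FSA.Ph μ (-(k * r) ^ 2 / 4)) r := by
    intro r hr
    have h1 := FSA.Fp_deriv hμ0 hs2 hs0 (mul_pos hk hr)
    have h2 : HasDerivAt (fun r : ℝ => k * r) k r := by
      simpa using (hasDerivAt_id r).const_mul k
    refine ((h1.comp r h2).const_mul (k ^ (-s))).congr_deriv ?_
    rw [Real.mul_rpow hk.le hr.le, Real.rpow_sub_one hk.ne', Real.rpow_neg hk.le]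
    have := (Real.rpow_pos_of_pos hk s).ne'
    field_simp
  have hGlim : Tendsto G atTop (nhds (k ^ (-s) *
      (2 ^ (s - 1) * Real.Gamma (s / 2) / Real.Gamma (μ - s / 2)))) :=
    ((FSA.Fp_tendsto hμ hs2 hs0 hsu).comp (tendsto_id.const_mul_atTop hk)).const_mul _
  refine ⟨_, Tendsto.congr' ?_ (hGlim.sub_const (G δ)), ?_⟩
  · filter_upwards [eventually_ge_atTop δ] with R hR
    have hpos : ∀ x ∈ uIcc δ R, 0 < x := by
      intro x hx
      rw [uIcc_of_le hR] at hx
      exact lt_of_lt_of_le hδ hx.1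
    have hintg := intervalIntegral.integral_eq_sub_of_hasDerivAt
      (fun x hx => hGd x (hpos x hx)) (by
        refine ContinuousOn.intervalIntegrable ?_
        refine ContinuousOn.mul (fun x hx => ?_) ?_
        · exact (Real.continuousAt_rpow_const _ _ (Or.inl (hpos x hx).ne')).continuousWithinAt
        · exact ((FSA.Ph_cont hμ0).comp (by fun_prop)).continuousOn)
    rw [← hintg, intervalIntegral.integral_of_le hR]
    refine setIntegral_congr_fun measurableSet_Ioc (fun r hr => ?_)
    have hr0 : 0 < r := lt_trans hδ hr.1
    rw [show ((d : ℝ) - 2) / 2 = μ - 1 by rw [hμd]; ring, FSA.bessel_eq (mul_pos hk hr0),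
      show (d : ℝ) - 1 - α = s - 1 by rw [hs]; ring]
    ring
  · have hΓ := (Real.Gamma_pos_of_pos (show 0 < μ + 1 by linarith)).ne'
    have hΓμ := (Real.Gamma_pos_of_pos hμ0).ne'
    have hs2' : s + 2 ≠ 0 := by linarith
    have hδs : δ ^ ((d : ℝ) + 2 - α) = δ ^ s * δ ^ 2 := by
      rw [← Real.rpow_two, ← Real.rpow_add hδ, hs]
      ring_nf
    have hGδ : G δ = δ ^ s * FSA.ps (FSA.bc μ s) (-(k ^ 2 * δ ^ 2) / 4) := by
      simp only [hG, FSA.Fp]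
      rw [Real.mul_rpow hk.le hδ.le, Real.rpow_neg hk.le, mul_pow]
      have := (Real.rpow_pos_of_pos hk s).ne'
      field_simp
    have hsum := ((FSA.bc_bdd hμ0 hs2 hs0).summable (-(k ^ 2 * δ ^ 2) / 4)).tsum_eq_zero_add
    have hT : (∑' n : ℕ, (-(k ^ 2 * δ ^ 2) / 4) ^ (n + 1) /
          ((Nat.factorial (n + 1) : ℝ) * Real.Gamma (((n : ℝ) + 1) + μ)) *
            (((d : ℝ) + 2 - α) / ((d : ℝ) + 2 * ((n : ℝ) + 1) - α))) =
        (s + 2) * ∑' n : ℕ, FSA.bc μ s (n + 1) * (-(k ^ 2 * δ ^ 2) / 4) ^ (n + 1) := by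
      rw [← tsum_mul_left]
      refine tsum_congr fun n => ?_
      unfold FSA.bc FSA.ac
      rw [show (d : ℝ) + 2 - α = s + 2 by rw [hs]; ring,
        show (d : ℝ) + 2 * ((n : ℝ) + 1) - α = s + 2 * (((n + 1 : ℕ) : ℝ)) by
          rw [hs]; push_cast; ring]
      push_cast
      ring
    have h0 : FSA.bc μ s 0 = 1 / (s * Real.Gamma μ) := by
      unfold FSA.bc FSA.ac
      simp
      ring
    have hk2 : (k / 2) ^ (α - (d : ℝ)) = k ^ (-s) * 2 ^ s := by
      rw [show α - (d : ℝ) = -s by rw [hs]; ring, Real.div_rpow hk.le two_pos.le,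
        Real.rpow_neg two_pos.le]
      field_simp
    have hαμ : α / 2 = μ - s / 2 := by rw [hs, hμd]; ring
    rw [hT, hδs, hGδ, hk2, hαμ, show (d : ℝ) + 2 - α = s + 2 by rw [hs]; ring,
      Real.rpow_sub_one two_ne_zero]
    have hps : FSA.ps (FSA.bc μ s) (-(k ^ 2 * δ ^ 2) / 4) = _ := hsum
    rw [hps, h0]
    have hΓα := (Real.Gamma_pos_of_pos (show 0 < μ - s / 2 by linarith)).ne'
    field_simp
    ring
end
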